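/- Fix an integer d ≥ 2. There exist constants C > 0 and c > 0, depending only on d, such that for every prime p and every nontrivial irreducible unitary representation π of SL₂(ℤ/pℤ), the proportion of tuples S = (g₁, …, g_d) ∈ (SL₂(ℤ/pℤ))^d (with respect to the uniform measure on the d-fold product) satisfying D(μ_{π,S}, f_{2d}) ≤ C / log p is at least 1 − c·p^{−1/4}. -/

import Mathlib

open MeasureTheory

noncomputable section

abbrev SL (n p : ℕ) := Matrix.SpecialLinearGroup (Fin n) (ZMod p)

/-- Density of the Kesten–McKay law with parameter `2d`. -/
noncomputable def kmDensity (d : ℕ) (x : ℝ) : ℝ :=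
  if x ^ 2 ≤ 4 * (2 * (d : ℝ) - 1) then
    2 * d * Real.sqrt (4 * (2 * (d : ℝ) - 1) - x ^ 2) /
      (2 * Real.pi * ((2 * (d : ℝ)) ^ 2 - x ^ 2))
  else 0

/-- The Kesten–McKay law with parameter `2d`, as a measure on `ℝ`. -/
noncomputable def kestenMcKay (d : ℕ) : Measure ℝ :=
  MeasureTheory.volume.withDensity fun x => ENNReal.ofReal (kmDensity d x)

/-- Discrepancy between two measures on ℝ. -/
noncomputable def discrepancy (ν μ : Measure ℝ) : ℝ :=
  sSup {r : ℝ | ∃ a b : ℝ, a ≤ b ∧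
    r = |(ν (Set.Icc a b)).toReal - (μ (Set.Icc a b)).toReal|}

/-- The element of the free group on `d` generators given by a word of length `m`. -/
def wordProd {d m : ℕ} (w : Fin m → Fin d × Bool) : FreeGroup (Fin d) :=
  (List.ofFn fun j => if (w j).2 then FreeGroup.of (w j).1 else (FreeGroup.of (w j).1)⁻¹).prod

/-- Evaluation of a word of length `m` in `d` letters at a tuple `S`. -/
def wordEval {G : Type*} [Group G] {d m : ℕ} (S : Fin d → G) (w : Fin m → Fin d × Bool) : G :=
  (List.ofFn fun j => if (w j).2 then S (w j).1 else (S (w j).1)⁻¹).prod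

/-- `N(d,m)`: the number of trivial words of length `m` in `d` letters. -/
noncomputable def Ntriv (d m : ℕ) : ℕ :=
  Nat.card {w : Fin m → Fin d × Bool // wordProd w = 1}

/-- `A_{π,S} = Σᵢ (π gᵢ + (π gᵢ)⁻¹)`. -/
noncomputable def Amat {G : Type*} [Group G] {n d : ℕ}
    (π : G →* Matrix.unitaryGroup (Fin n) ℂ) (S : Fin d → G) : Matrix (Fin n) (Fin n) ℂ :=
  ∑ i, ((π (S i) : Matrix (Fin n) (Fin n) ℂ) + ((π (S i))⁻¹ : Matrix (Fin n) (Fin n) ℂ))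

/-- Spectral probability measure of a Hermitian matrix. -/
noncomputable def specMeasure {n : ℕ} (A : Matrix (Fin n) (Fin n) ℂ) : Measure ℝ := by
  classical
  exact if hA : A.IsHermitian then
    (n : ENNReal)⁻¹ • ∑ j : Fin n, Measure.dirac (hA.eigenvalues j) else 0

/-- A unitary representation is irreducible if the only invariant subspaces are `⊥` and `⊤`. -/
def IsIrreducibleRep {G : Type*} [Group G] {n : ℕ}
    (π : G →* Matrix.unitaryGroup (Fin n) ℂ) : Prop :=
  ∀ W : Submodule ℂ (Fin n → ℂ),
    (∀ g : G, ∀ v ∈ W, (π g : Matrix (Fin n) (Fin n) ℂ).mulVec v ∈ W) → W = ⊥ ∨ W = ⊤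

/-- Number of eigenvalues of a Hermitian matrix with `|λ| > t`, with multiplicity. -/
noncomputable def excCount {n : ℕ} (A : Matrix (Fin n) (Fin n) ℂ) (t : ℝ) : ℕ := by
  classical
  exact if hA : A.IsHermitian then
    (Finset.univ.filter fun j : Fin n => t < |hA.eigenvalues j|).card else 0

end

section PartA1
open Matrix

theorem schur_scalar {G : Type*} [Group G] {n : ℕ} (hn : 0 < n)
    (π : G →* Matrix.unitaryGroup (Fin n) ℂ) (hπ : IsIrreducibleRep π)
    (M : Matrix (Fin n) (Fin n) ℂ)
    (hM : ∀ g, (π g : Matrix (Fin n) (Fin n) ℂ) * M = M * (π g : Matrix (Fin n) (Fin n) ℂ)) :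
    ∃ c : ℂ, M = c • (1 : Matrix (Fin n) (Fin n) ℂ) := by
  have : Nonempty (Fin n) := ⟨⟨0, hn⟩⟩
  obtain ⟨c, hc⟩ := Module.End.exists_eigenvalue (Matrix.toLin' M)
  refine ⟨c, ?_⟩
  have key := hπ (Module.End.eigenspace (Matrix.toLin' M) c) (by
    intro g v hv
    rw [Module.End.mem_eigenspace_iff] at hv ⊢
    rw [Matrix.toLin'_apply] at hv ⊢
    rw [Matrix.mulVec_mulVec, ← hM g, ← Matrix.mulVec_mulVec, hv, Matrix.mulVec_smul])
  rcases key with h | h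
  · exact absurd h hc
  · apply Matrix.toLin'.injective
    ext1
    ext1
    have hx : ∀ x, x ∈ Module.End.eigenspace (Matrix.toLin' M) c := by
      intro x; rw [h]; trivial
    have := Module.End.mem_eigenspace_iff.1 (hx (Pi.single (by assumption) 1))
    simpa using this

theorem schur_avg {G : Type*} [Group G] [Fintype G] {n : ℕ} (hn : 0 < n)
    (π : G →* Matrix.unitaryGroup (Fin n) ℂ) (hπ : IsIrreducibleRep π)
    (X : Matrix (Fin n) (Fin n) ℂ) :
    ∑ g, (π g : Matrix (Fin n) (Fin n) ℂ) * X * star (π g : Matrix (Fin n) (Fin n) ℂ) =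
      ((Fintype.card G : ℂ) * X.trace / n) • (1 : Matrix (Fin n) (Fin n) ℂ) := by
  set Y := ∑ g, (π g : Matrix (Fin n) (Fin n) ℂ) * X * star (π g : Matrix (Fin n) (Fin n) ℂ)
    with hY
  have hU : ∀ g, star (π g : Matrix (Fin n) (Fin n) ℂ) * (π g : Matrix (Fin n) (Fin n) ℂ) = 1 :=
    fun g => Matrix.UnitaryGroup.star_mul_self _
  obtain ⟨c, hc⟩ := schur_scalar hn π hπ Y (by
    intro h
    have h1 : ((π h : Matrix (Fin n) (Fin n) ℂ) * Y) =
        ∑ g, (π (h * g) : Matrix (Fin n) (Fin n) ℂ) * X *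
          star (π (h * g) : Matrix (Fin n) (Fin n) ℂ) * (π h : Matrix (Fin n) (Fin n) ℂ) := by
      rw [hY, Finset.mul_sum]
      refine Finset.sum_congr rfl fun g _ => ?_
      simp only [map_mul, Matrix.UnitaryGroup.mul_val, star_mul]
      simp only [mul_assoc, hU, mul_one]
    rw [h1, hY, Finset.sum_mul]
    exact Fintype.sum_equiv (Equiv.mulLeft h) _ (fun g => (π g : Matrix (Fin n) (Fin n) ℂ) * X *
          star (π g : Matrix (Fin n) (Fin n) ℂ) * (π h : Matrix (Fin n) (Fin n) ℂ))
          (fun g => rfl))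
  have ht : Y.trace = (Fintype.card G : ℂ) * X.trace := by
    rw [hY, Matrix.trace_sum]
    have : ∀ g, ((π g : Matrix (Fin n) (Fin n) ℂ) * X *
        star (π g : Matrix (Fin n) (Fin n) ℂ)).trace = X.trace := by
      intro g
      rw [Matrix.trace_mul_comm, ← mul_assoc, hU, one_mul]
    simp [this]
  rw [hc] at ht ⊢
  have hn' : (n : ℂ) ≠ 0 := by exact_mod_cast hn.ne'
  rw [← ht]
  simp [Matrix.trace_smul, hn']

theorem sum_char_sq {G : Type*} [Group G] [Fintype G] {n : ℕ} (hn : 0 < n)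
    (π : G →* Matrix.unitaryGroup (Fin n) ℂ) (hπ : IsIrreducibleRep π) :
    ∑ g, ‖(π g : Matrix (Fin n) (Fin n) ℂ).trace‖ ^ 2 = Fintype.card G := by
  have hn' : (n : ℂ) ≠ 0 := by exact_mod_cast hn.ne'
  have h1 : ∀ k l : Fin n, ∑ g, (π g : Matrix (Fin n) (Fin n) ℂ) k k *
      star ((π g : Matrix (Fin n) (Fin n) ℂ) l l) =
      if k = l then (Fintype.card G : ℂ) / n else 0 := by
    intro k l
    have := congrFun (congrFun (schur_avg hn π hπ (Matrix.single k l (1:ℂ))) k) l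
    rw [Matrix.sum_apply] at this
    have h2 : ∀ g, ((π g : Matrix (Fin n) (Fin n) ℂ) * (Matrix.single k l 1 : Matrix (Fin n) (Fin n) ℂ) *
      star (π g : Matrix (Fin n) (Fin n) ℂ)) k l = (π g : Matrix (Fin n) (Fin n) ℂ) k k *
      star ((π g : Matrix (Fin n) (Fin n) ℂ) l l) := by
      intro g
      rw [Matrix.mul_apply, Finset.sum_eq_single l]
      · simp [Matrix.star_apply]
      · intro b _ hb
        rw [Matrix.mul_single_apply_of_ne _ _ _ _ _ hb]; simp
      · simp
    simp only [h2] at this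
    rw [this]
    by_cases hkl : k = l
    · subst hkl; simp [Matrix.trace]
    · simp [hkl]
  have h2 : ((∑ g, ‖(π g : Matrix (Fin n) (Fin n) ℂ).trace‖ ^ 2 : ℝ) : ℂ) = Fintype.card G := by
    push_cast
    have : ∀ g, ((‖(π g : Matrix (Fin n) (Fin n) ℂ).trace‖ : ℂ) ^ 2) =
        ∑ k, ∑ l, (π g : Matrix (Fin n) (Fin n) ℂ) k k *
      star ((π g : Matrix (Fin n) (Fin n) ℂ) l l) := by
      intro g
      rw [← Complex.mul_conj', Matrix.trace, map_sum, Finset.sum_mul_sum]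
      rfl
    simp only [this]
    rw [Finset.sum_comm]
    have : ∀ k : Fin n, ∑ g, ∑ l, (π g : Matrix (Fin n) (Fin n) ℂ) k k *
      star ((π g : Matrix (Fin n) (Fin n) ℂ) l l) = (Fintype.card G : ℂ) / n := by
      intro k
      rw [Finset.sum_comm]
      simp only [h1]
      simp
    simp only [this]
    simp
    field_simp
  exact_mod_cast h2

theorem char_sq_mul_conj_le {G : Type*} [Group G] [Fintype G] [DecidableEq G] {n : ℕ} (hn : 0 < n)
    (π : G →* Matrix.unitaryGroup (Fin n) ℂ) (hπ : IsIrreducibleRep π) (g : G) :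
    ‖(π g : Matrix (Fin n) (Fin n) ℂ).trace‖ ^ 2 ≤
      (Finset.univ.filter fun h : G => h * g = g * h).card := by
  classical
  have hconj : ∀ x : G, (π (x * g * x⁻¹) : Matrix (Fin n) (Fin n) ℂ).trace =
      (π g : Matrix (Fin n) (Fin n) ℂ).trace := by
    intro x
    have h0 : (π (x⁻¹ * x) : Matrix (Fin n) (Fin n) ℂ) = 1 := by simp
    rw [map_mul, Matrix.UnitaryGroup.mul_val] at h0
    rw [map_mul, map_mul, Matrix.UnitaryGroup.mul_val, Matrix.UnitaryGroup.mul_val,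
      Matrix.trace_mul_comm, ← mul_assoc, h0, one_mul]
  set c := (Finset.univ.filter fun h : G => h * g = g * h).card
  set T := (Finset.univ : Finset G).image (fun x => x * g * x⁻¹)
  have hcard : Fintype.card G ≤ c * T.card := by
    refine Finset.card_le_mul_card_image (f := fun x : G => x * g * x⁻¹) Finset.univ c ?_
    intro b hb
    obtain ⟨y, -, rfl⟩ := Finset.mem_image.1 hb
    refine Finset.card_le_card_of_injOn (fun x => y⁻¹ * x) ?_ ?_
    · intro x hx
      simp only [Finset.coe_filter, Finset.mem_univ, true_and, Set.mem_ofPred_eq] at hx ⊢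
      have : x * g = y * g * y⁻¹ * x := by rw [← hx]; group
      rw [mul_assoc, this]; group
    · intro a _ b _ hab
      simpa using hab
  have h1 : (T.card : ℝ) * ‖(π g : Matrix (Fin n) (Fin n) ℂ).trace‖ ^ 2 ≤ Fintype.card G := by
    rw [← sum_char_sq hn π hπ]
    calc _ = ∑ x ∈ T, ‖(π x : Matrix (Fin n) (Fin n) ℂ).trace‖ ^ 2 := by
          rw [Finset.sum_congr rfl (g := fun _ => ‖(π g : Matrix (Fin n) (Fin n) ℂ).trace‖ ^ 2)]
          · simp
          · intro x hx
            obtain ⟨y, -, rfl⟩ := Finset.mem_image.1 hx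
            simp only [hconj]
      _ ≤ _ := Finset.sum_le_sum_of_subset_of_nonneg (Finset.subset_univ _)
          (fun _ _ _ => by positivity)
  have hTpos : (0 : ℝ) < T.card := by
    have : T.Nonempty := ⟨_, Finset.mem_image_of_mem _ (Finset.mem_univ 1)⟩
    exact_mod_cast this.card_pos
  have h2 : (Fintype.card G : ℝ) ≤ c * T.card := by exact_mod_cast hcard
  have h3 := h1.trans h2
  rw [mul_comm (c : ℝ)] at h3
  exact le_of_mul_le_mul_left h3 hTpos

theorem norm_trace_le {G : Type*} [Group G] {n : ℕ}
    (π : G →* Matrix.unitaryGroup (Fin n) ℂ) (g : G) :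
    ‖(π g : Matrix (Fin n) (Fin n) ℂ).trace‖ ≤ n := by
  rw [Matrix.trace]
  refine (norm_sum_le _ _).trans ?_
  calc _ ≤ ∑ _i : Fin n, (1 : ℝ) := Finset.sum_le_sum fun i _ => by
        simpa using entry_norm_bound_of_unitary (π g).2 i i
    _ = n := by simp

end PartA1

section PartA2
set_option linter.unusedSimpArgs false
open Matrix

/-- A `2 × 2` matrix is scalar. -/
def IsSc {F : Type*} [Field F] (M : Matrix (Fin 2) (Fin 2) F) : Prop :=
  M 0 1 = 0 ∧ M 1 0 = 0 ∧ M 0 0 = M 1 1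

theorem comm_form {F : Type*} [Field F] (g : Matrix (Fin 2) (Fin 2) F) (hg : ¬ IsSc g) :
    ∃ f : Matrix (Fin 2) (Fin 2) F → F, ∀ h, h * g = g * h →
      h = !![h 0 0 - f h * g 0 0 + f h * g 0 0, f h * g 0 1;
        f h * g 1 0, h 0 0 - f h * g 0 0 + f h * g 1 1] := by
  have hcomm : ∀ h : Matrix (Fin 2) (Fin 2) F, h * g = g * h →
      h 0 1 * g 1 0 = g 0 1 * h 1 0 ∧
      h 0 0 * g 0 1 + h 0 1 * g 1 1 = g 0 0 * h 0 1 + g 0 1 * h 1 1 ∧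
      h 1 0 * g 0 0 + h 1 1 * g 1 0 = g 1 0 * h 0 0 + g 1 1 * h 1 0 := by
    intro h hh
    have h00 := congrFun (congrFun hh 0) 0
    have h01 := congrFun (congrFun hh 0) 1
    have h10 := congrFun (congrFun hh 1) 0
    simp only [Matrix.mul_apply, Fin.sum_univ_two] at h00 h01 h10
    refine ⟨by linear_combination h00, h01, h10⟩
  by_cases hb : g 0 1 = 0
  · by_cases hc : g 1 0 = 0
    · have ha : g 0 0 - g 1 1 ≠ 0 := fun h => hg ⟨hb, hc, sub_eq_zero.1 h⟩
      refine ⟨fun h => (h 0 0 - h 1 1) / (g 0 0 - g 1 1), fun h hh => ?_⟩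
      obtain ⟨h1, h2, h3⟩ := hcomm h hh
      rw [hb] at h2
      rw [hc] at h3
      have e1 : h 0 1 = 0 := by
        have : (g 0 0 - g 1 1) * h 0 1 = 0 := by linear_combination -h2
        simpa [ha] using this
      have e2 : h 1 0 = 0 := by
        have : (g 0 0 - g 1 1) * h 1 0 = 0 := by linear_combination h3
        simpa [ha] using this
      ext i j; fin_cases i <;> fin_cases j
      · simp
      · simp [hb, e1]
      · simp [hc, e2]
      · simp; field_simp; ring
    · refine ⟨fun h => h 1 0 / g 1 0, fun h hh => ?_⟩
      obtain ⟨h1, h2, h3⟩ := hcomm h hh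
      ext i j; fin_cases i <;> fin_cases j
      · simp
      · simp [hb]; rw [hb] at h1; simpa [hc] using h1
      · simp [hc]
      · simp; field_simp; linear_combination h3
  · refine ⟨fun h => h 0 1 / g 0 1, fun h hh => ?_⟩
    obtain ⟨h1, h2, h3⟩ := hcomm h hh
    ext i j; fin_cases i <;> fin_cases j
    · simp
    · simp [hb]
    · simp; field_simp; linear_combination -h1
    · simp; field_simp; linear_combination -h2

theorem quad_card {F : Type*} [Field F] [Fintype F] [DecidableEq F] (α β : F) :
    (Finset.univ.filter fun x : F => x * x + α * x + β = 0).card ≤ 2 := by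
  open Polynomial in
  have hd : (X ^ 2 + C α * X + C β : F[X]).natDegree = 2 := by compute_degree!
  have h0 : (Polynomial.X ^ 2 + Polynomial.C α * Polynomial.X + Polynomial.C β : Polynomial F) ≠ 0 := by
    intro h; rw [h] at hd; simp at hd
  rw [← hd]
  refine Polynomial.card_le_degree_of_subset_roots ?_
  intro x hx
  have hx' := (Finset.mem_filter.1 hx).2
  rw [Polynomial.mem_roots h0]
  simp [Polynomial.IsRoot.def]
  linear_combination hx'

theorem centralizer_card {p : ℕ} [Fact p.Prime] (g : SL 2 p)
    (hg : ¬ IsSc (g : Matrix (Fin 2) (Fin 2) (ZMod p))) :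
    (Finset.univ.filter fun h : SL 2 p => h * g = g * h).card ≤ 2 * p := by
  classical
  obtain ⟨f, hf⟩ := comm_form _ hg
  have key := Finset.card_le_mul_card_image (f := fun h : SL 2 p => f h)
    (Finset.univ.filter fun h : SL 2 p => h * g = g * h) 2 (by
    intro y _
    refine le_trans ?_ (quad_card (y * (g 0 0 + g 1 1)) (y ^ 2 - 1))
    have hform : ∀ h : SL 2 p, h * g = g * h → f h = y →
        (h : Matrix (Fin 2) (Fin 2) (ZMod p)) = !![h 0 0 - y * g 0 0 + y * g 0 0, y * g 0 1;
        y * g 1 0, h 0 0 - y * g 0 0 + y * g 1 1] := by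
      intro h h1 h2
      have := hf h (by
        have := congrArg (fun z : SL 2 p => (z : Matrix (Fin 2) (Fin 2) (ZMod p))) h1
        simpa using this)
      rwa [h2] at this
    refine Finset.card_le_card_of_injOn (fun h => h 0 0 - y * g 0 0) ?_ ?_
    · intro h hh
      simp only [Finset.coe_filter, Finset.mem_filter, Finset.mem_univ, true_and,
        Set.mem_ofPred_eq] at hh ⊢
      have e := hform h hh.1 hh.2
      have d1 : h 0 0 * h 1 1 - h 0 1 * h 1 0 = 1 := by
        have := h.det_coe; rwa [Matrix.det_fin_two] at this
      have d2 : g 0 0 * g 1 1 - g 0 1 * g 1 0 = 1 := by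
        have := g.det_coe; rwa [Matrix.det_fin_two] at this
      have e01 : h 0 1 = y * g 0 1 := by
        have := congrFun (congrFun e 0) 1; simpa using this
      have e10 : h 1 0 = y * g 1 0 := by
        have := congrFun (congrFun e 1) 0; simpa using this
      have e11 : h 1 1 = h 0 0 - y * g 0 0 + y * g 1 1 := by
        have := congrFun (congrFun e 1) 1; simpa using this
      rw [e01, e10, e11] at d1
      linear_combination d1 - y ^ 2 * d2
    · intro h hh h' hh' heq
      simp only [Finset.coe_filter, Finset.mem_filter, Finset.mem_univ, true_and,
        Set.mem_ofPred_eq] at hh hh' heq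
      have e := hform h hh.1 hh.2
      have e' := hform h' hh'.1 hh'.2
      apply Subtype.ext
      rw [e, e', heq])
  refine key.trans ?_
  gcongr
  calc _ ≤ (Finset.univ : Finset (ZMod p)).card := Finset.card_le_card (Finset.subset_univ _)
    _ = p := by simp [ZMod.card]

/-- Upper unipotent. -/
def upM {p : ℕ} (t : ZMod p) : SL 2 p := ⟨!![1, t; 0, 1], by simp⟩
/-- Lower unipotent. -/
def loM {p : ℕ} (t : ZMod p) : SL 2 p := ⟨!![1, 0; t, 1], by simp⟩
/-- Weyl element. -/
def weM (p : ℕ) : SL 2 p := ⟨!![0, 1; -1, 0], by simp⟩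
/-- Diagonal element. -/
def diM {p : ℕ} (a : (ZMod p)ˣ) : SL 2 p := ⟨!![(a : ZMod p), 0; 0, ((a⁻¹ : (ZMod p)ˣ) : ZMod p)], by simp⟩

theorem upM_coe {p : ℕ} (t : ZMod p) :
    (upM t : Matrix (Fin 2) (Fin 2) (ZMod p)) = !![1, t; 0, 1] := rfl
theorem loM_coe {p : ℕ} (t : ZMod p) :
    (loM t : Matrix (Fin 2) (Fin 2) (ZMod p)) = !![1, 0; t, 1] := rfl
theorem weM_coe (p : ℕ) :
    (weM p : Matrix (Fin 2) (Fin 2) (ZMod p)) = !![0, 1; -1, 0] := rfl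
theorem diM_coe {p : ℕ} (a : (ZMod p)ˣ) :
    (diM a : Matrix (Fin 2) (Fin 2) (ZMod p)) =
      !![(a : ZMod p), 0; 0, ((a⁻¹ : (ZMod p)ˣ) : ZMod p)] := rfl

theorem upM_pow {p : ℕ} (t : ZMod p) (k : ℕ) : (upM t) ^ k = upM ((k : ZMod p) * t) := by
  induction k with
  | zero => ext i j; fin_cases i <;> fin_cases j <;> simp [upM_coe]
  | succ k ih =>
    rw [pow_succ, ih]
    ext i j; fin_cases i <;> fin_cases j <;> simp [upM_coe, Matrix.SpecialLinearGroup.coe_mul, Matrix.mul_apply, Fin.sum_univ_two]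
    ring

theorem upM_conj {p : ℕ} (a : (ZMod p)ˣ) (t : ZMod p) :
    diM a * upM t = upM ((a : ZMod p) ^ 2 * t) * diM a := by
  ext i j; fin_cases i <;> fin_cases j <;> simp [upM_coe, diM_coe, Matrix.SpecialLinearGroup.coe_mul, Matrix.mul_apply, Fin.sum_univ_two]
  have : (a : ZMod p) * ((a⁻¹ : (ZMod p)ˣ) : ZMod p) = 1 := by simp
  linear_combination (-(a : ZMod p) * t) * this

theorem loM_conj {p : ℕ} (t : ZMod p) : loM t = (weM p) * upM (-t) * (weM p)⁻¹ := by
  rw [eq_mul_inv_iff_mul_eq]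
  ext i j; fin_cases i <;> fin_cases j <;> simp [upM_coe, loM_coe, weM_coe, Matrix.SpecialLinearGroup.coe_mul, Matrix.mul_apply, Fin.sum_univ_two]

theorem rep_trivial_of_up {p : ℕ} [Fact p.Prime] {H : Type*} [Group H] (π : SL 2 p →* H)
    (h : π (upM 1) = 1) (g : SL 2 p) : π g = 1 := by
  have hup : ∀ t : ZMod p, π (upM t) = 1 := by
    intro t
    have : upM t = (upM (1 : ZMod p)) ^ t.val := by rw [upM_pow]; simp
    rw [this, map_pow, h, one_pow]
  have hlo : ∀ t : ZMod p, π (loM t) = 1 := by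
    intro t; rw [loM_conj, map_mul, map_mul, hup, mul_one, ← map_mul, mul_inv_cancel, map_one]
  have hmain : ∀ g : SL 2 p, g 1 0 ≠ 0 → π g = 1 := by
    intro g hg
    have d2 : g 0 0 * g 1 1 - g 0 1 * g 1 0 = 1 := by
        have := g.det_coe; rwa [Matrix.det_fin_two] at this
    have : g = upM ((g 0 0 - 1) / g 1 0) * loM (g 1 0) * upM ((g 1 1 - 1) / g 1 0) := by
      ext i j; fin_cases i <;> fin_cases j <;>
        simp [upM_coe, loM_coe, Matrix.SpecialLinearGroup.coe_mul, Matrix.mul_apply, Fin.sum_univ_two, hg]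
      · field_simp
        linear_combination -d2
      · field_simp
        ring
    rw [this, map_mul, map_mul, hup, hlo, hup]; simp
  have hw : π (weM p) = 1 := hmain _ (by simp [weM_coe])
  by_cases hg : g 1 0 = 0
  · have d2 : g 0 0 * g 1 1 - g 0 1 * g 1 0 = 1 := by
        have := g.det_coe; rwa [Matrix.det_fin_two] at this
    have ha : g 0 0 ≠ 0 := by
      intro h0; rw [hg, h0] at d2; simp at d2
    have h1 := hmain (weM p * g) (by simp [weM_coe, Matrix.SpecialLinearGroup.coe_mul, Matrix.mul_apply, Fin.sum_univ_two, ha])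
    rwa [map_mul, hw, one_mul] at h1
  · exact hmain g hg

end PartA2

section PartA3
open Matrix

theorem spectrum_card_le {n : ℕ} (U : Matrix (Fin n) (Fin n) ℂ) (s : Finset ℂ)
    (hs : ∀ z ∈ s, z ∈ spectrum ℂ U) : s.card ≤ n := by
  have h1 : s.card ≤ U.charpoly.natDegree := by
    refine Polynomial.card_le_degree_of_subset_roots ?_
    intro z hz
    have hz' : z ∈ s := by simpa using hz
    rw [Polynomial.mem_roots (Matrix.charpoly_monic U).ne_zero]
    exact Matrix.mem_spectrum_iff_isRoot_charpoly.1 (hs z hz')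
  simpa [Matrix.charpoly_natDegree_eq_dim] using h1

theorem exists_eig_ne_one {n p : ℕ} (hp : 2 ≤ p) (U : Matrix (Fin n) (Fin n) ℂ)
    (hU : U ^ p = 1) (hne : U ≠ 1) : ∃ z ∈ spectrum ℂ U, z ≠ 1 ∧ z ^ p = 1 := by
  set q : Polynomial ℂ := ∑ i ∈ Finset.range p, Polynomial.X ^ i with hq
  have hmul : (Polynomial.aeval U q) * (U - 1) = 0 := by
    have h := congrArg (Polynomial.aeval U) (geom_sum_mul (Polynomial.X : Polynomial ℂ) p)
    simp only [map_mul, map_sub, map_one, map_pow, Polynomial.aeval_X, hU, sub_self] at h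
    exact h
  have h0 : (0 : ℂ) ∈ spectrum ℂ (Polynomial.aeval U q) := by
    rw [spectrum.zero_mem_iff]
    intro hunit
    have := (hunit.mul_right_eq_zero).1 hmul
    exact hne (sub_eq_zero.1 this)
  have hdeg : 0 < q.degree := by
    have h1 : q.coeff (p - 1) = 1 := by
      simp [hq, Polynomial.coeff_X_pow]
      omega
    have : p - 1 ≤ q.natDegree := Polynomial.le_natDegree_of_ne_zero (by rw [h1]; exact one_ne_zero)
    exact Polynomial.natDegree_pos_iff_degree_pos.1 (by omega)
  rw [spectrum.map_polynomial_aeval_of_degree_pos U q hdeg] at h0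
  obtain ⟨z, hz, hz0⟩ := h0
  refine ⟨z, hz, ?_, ?_⟩
  · rintro rfl
    simp [hq, Polynomial.eval_finsetSum] at hz0
    omega
  · have h := congrArg (Polynomial.eval z) (geom_sum_mul (Polynomial.X : Polynomial ℂ) p)
    rw [← hq] at h
    simp only [Polynomial.eval_mul, hz0] at h
    simp at h
    exact (sub_eq_zero.1 h.symm)

theorem dim_bound {p : ℕ} [Fact p.Prime] {n : ℕ}
    (π : SL 2 p →* Matrix.unitaryGroup (Fin n) ℂ) (hne : ∃ g, π g ≠ 1) :
    p - 1 ≤ 2 * n := by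
  classical
  have hp : p.Prime := Fact.out
  set U : Matrix (Fin n) (Fin n) ℂ := (π (upM 1) : Matrix (Fin n) (Fin n) ℂ) with hUdef
  have hpow : ∀ k : ℕ, (π (upM (k : ZMod p)) : Matrix (Fin n) (Fin n) ℂ) = U ^ k := by
    intro k
    have : upM (k : ZMod p) = (upM (1 : ZMod p)) ^ k := by rw [upM_pow]; simp
    rw [this, map_pow, hUdef]; rfl
  have hUp : U ^ p = 1 := by
    rw [← hpow]
    have : upM ((p : ℕ) : ZMod p) = 1 := by
      ext i j; fin_cases i <;> fin_cases j <;> simp [upM_coe]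
    rw [this, map_one]; rfl
  have hU1 : U ≠ 1 := by
    intro h
    obtain ⟨g, hg⟩ := hne
    exact hg (rep_trivial_of_up π (Subtype.ext h) g)
  obtain ⟨z, hz, hz1, hzp⟩ := exists_eig_ne_one hp.two_le U hUp hU1
  have hord : orderOf z = p := by
    have := orderOf_dvd_of_pow_eq_one hzp
    rcases (Nat.dvd_prime hp).1 this with h | h
    · exact absurd (orderOf_eq_one_iff.1 h) hz1
    · exact h
  have hmem : ∀ a : (ZMod p)ˣ, z ^ (((a : ZMod p) ^ 2).val) ∈ spectrum ℂ U := by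
    intro a
    set k := ((a : ZMod p) ^ 2).val with hk
    have h1 : z ^ k ∈ spectrum ℂ (U ^ k) := by
      exact spectrum.pow_mem_pow U k hz
    have h2 : (π (diM a) : Matrix (Fin n) (Fin n) ℂ) * U =
        U ^ k * (π (diM a) : Matrix (Fin n) (Fin n) ℂ) := by
      rw [← hpow, hUdef, ← Matrix.UnitaryGroup.mul_val, ← Matrix.UnitaryGroup.mul_val,
        ← map_mul, ← map_mul, upM_conj, hk, ZMod.natCast_zmod_val, mul_one]
    let D : (Matrix (Fin n) (Fin n) ℂ)ˣ := Unitary.toUnits (π (diM a))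
    have h3 : U ^ k = (D : Matrix (Fin n) (Fin n) ℂ) * U * ((D⁻¹ : (Matrix (Fin n) (Fin n) ℂ)ˣ) : Matrix (Fin n) (Fin n) ℂ) := by
      rw [Units.eq_mul_inv_iff_mul_eq]
      exact h2.symm
    rw [h3, spectrum.units_conjugate] at h1
    exact h1
  have hcard := Finset.card_le_mul_card_image
    (f := fun a : (ZMod p)ˣ => z ^ (((a : ZMod p) ^ 2).val)) Finset.univ 2 (by
    intro b hb
    obtain ⟨a, -, rfl⟩ := Finset.mem_image.1 hb
    refine le_trans ?_ (quad_card (0 : ZMod p) (-((a : ZMod p) ^ 2)))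
    refine Finset.card_le_card_of_injOn (fun x => (x : ZMod p)) ?_ ?_
    · intro x hx
      simp only [Finset.coe_filter, Finset.mem_univ, true_and,
        Set.mem_ofPred_eq] at hx ⊢
      have h1 := pow_injOn_Iio_orderOf (x := z) (by rw [hord]; exact ZMod.val_lt _)
        (by rw [hord]; exact ZMod.val_lt _) hx
      have h2 := ZMod.val_injective p h1
      linear_combination h2
    · intro x _ y _ hxy
      exact Units.ext hxy)
  rw [Finset.card_univ, ZMod.card_units_eq_totient, Nat.totient_prime hp] at hcard
  refine hcard.trans ?_
  gcongr
  refine spectrum_card_le U _ ?_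
  intro y hy
  obtain ⟨a, -, rfl⟩ := Finset.mem_image.1 hy
  exact hmem a

/-- Character ratio bound for non-scalar elements. -/
theorem char_ratio {p : ℕ} [Fact p.Prime] (hp3 : 3 ≤ p) {n : ℕ}
    (π : SL 2 p →* Matrix.unitaryGroup (Fin n) ℂ) (hπ : IsIrreducibleRep π)
    (hne : ∃ g, π g ≠ 1) (g : SL 2 p) (hg : ¬ IsSc (g : Matrix (Fin 2) (Fin 2) (ZMod p))) :
    ‖(π g : Matrix (Fin n) (Fin n) ℂ).trace‖ * Real.sqrt p ≤ 6 * n := by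
  have hd := dim_bound π hne
  have hn : 0 < n := by omega
  have h1 := char_sq_mul_conj_le hn π hπ g
  have h2 : ((Finset.univ.filter fun h : SL 2 p => h * g = g * h).card : ℝ) ≤ 2 * p := by
    exact_mod_cast centralizer_card g hg
  have h3 := h1.trans h2
  have hd' : (p : ℝ) ≤ 2 * n + 1 := by
    have : p ≤ 2 * n + 1 := by omega
    exact_mod_cast this
  have hn1 : (1 : ℝ) ≤ n := by exact_mod_cast hn
  have hp0 : (0 : ℝ) ≤ p := by positivity
  refine (sq_le_sq₀ (by positivity) (by positivity)).1 ?_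
  rw [mul_pow, Real.sq_sqrt hp0]
  nlinarith [norm_nonneg ((π g : Matrix (Fin n) (Fin n) ℂ).trace)]

end PartA3

section PartA4
set_option linter.unusedSimpArgs false
open Matrix

/-- inverse letter -/
def linv {d : ℕ} (l : Fin d × Bool) : Fin d × Bool := (l.1, !l.2)

theorem linv_linv {d : ℕ} (l : Fin d × Bool) : linv (linv l) = l := by simp [linv]

theorem linv_ne {d : ℕ} (l : Fin d × Bool) : linv l ≠ l := by
  intro h
  have := congrArg Prod.snd h
  simp [linv] at this

/-- letter value -/
def lv {G : Type*} [Group G] {d : ℕ} (S : Fin d → G) (l : Fin d × Bool) : G :=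
  if l.2 then S l.1 else (S l.1)⁻¹

theorem lv_linv {G : Type*} [Group G] {d : ℕ} (S : Fin d → G) (l : Fin d × Bool) :
    lv S (linv l) = (lv S l)⁻¹ := by
  obtain ⟨i, b⟩ := l
  cases b <;> simp [lv, linv]

/-- the parametrized tuple -/
def Sz {p d : ℕ} (z : Fin d × Bool → SL 2 p) (t : ZMod p) (i : Fin d) : SL 2 p :=
  z (i, true) * upM t * (z (i, false))⁻¹

/-- sign of a letter -/
def lsgn {p d : ℕ} (l : Fin d × Bool) : ZMod p := if l.2 then 1 else -1

theorem upM_inv {p : ℕ} (t : ZMod p) : (upM t)⁻¹ = upM (-t) := by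
  rw [inv_eq_iff_mul_eq_one]
  ext i j; fin_cases i <;> fin_cases j <;>
    simp [upM_coe, Matrix.SpecialLinearGroup.coe_mul, Matrix.mul_apply, Fin.sum_univ_two]

theorem lv_Sz {p d : ℕ} (z : Fin d × Bool → SL 2 p) (t : ZMod p) (l : Fin d × Bool) :
    lv (Sz z t) l = z l * upM (lsgn l * t) * (z (linv l))⁻¹ := by
  obtain ⟨i, b⟩ := l
  cases b
  · simp [lv, Sz, lsgn, linv, upM_inv, mul_assoc]
  · simp [lv, Sz, lsgn, linv]

/-- top coefficient of a letter -/
def topL {p d : ℕ} (z : Fin d × Bool → SL 2 p) (l : Fin d × Bool) :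
    Matrix (Fin 2) (Fin 2) (ZMod p) :=
  (lsgn l : ZMod p) • ((z l : Matrix (Fin 2) (Fin 2) (ZMod p)) * !![0, 1; 0, 0] *
    ((z (linv l))⁻¹ : SL 2 p).1)

theorem lv_mat {p d : ℕ} (z : Fin d × Bool → SL 2 p) (t : ZMod p) (l : Fin d × Bool) :
    (lv (Sz z t) l).1 = (z l * (z (linv l))⁻¹ : SL 2 p).1 + t • topL z l := by
  have h : (upM (lsgn l * t) : Matrix (Fin 2) (Fin 2) (ZMod p)) =
      1 + (t * lsgn l) • !![0, 1; 0, 0] := by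
    ext i j; fin_cases i <;> fin_cases j <;> simp [upM_coe, mul_comm]
  rw [lv_Sz, Matrix.SpecialLinearGroup.coe_mul, Matrix.SpecialLinearGroup.coe_mul, h,
    Matrix.SpecialLinearGroup.coe_mul, topL, mul_add, add_mul, mul_one, smul_smul]
  simp only [Matrix.mul_smul, Matrix.smul_mul]

theorem word_poly {p d : ℕ} [Fact p.Prime] (z : Fin d × Bool → SL 2 p)
    (w : List (Fin d × Bool)) :
    ∃ P : Fin 2 → Fin 2 → Polynomial (ZMod p), (∀ i j, (P i j).natDegree ≤ w.length) ∧
      (∀ t i j, (P i j).eval t =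
        ((w.map (lv (Sz z t))).prod : Matrix (Fin 2) (Fin 2) (ZMod p)) i j) ∧
      (∀ i j, (P i j).coeff w.length = (w.map (topL z)).prod i j) := by
  induction w with
  | nil =>
    refine ⟨fun i j => if i = j then 1 else 0, ?_, ?_, ?_⟩
    · intro i j; dsimp only; split_ifs <;> simp
    · intro t i j; dsimp only; split_ifs with h <;> simp [h, Matrix.one_apply]
    · intro i j; dsimp only; split_ifs with h <;> simp [h, Matrix.one_apply]
  | cons l w ih =>
    obtain ⟨P, h1, h2, h3⟩ := ih
    set A : Matrix (Fin 2) (Fin 2) (ZMod p) := (z l * (z (linv l))⁻¹ : SL 2 p).1 with hA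
    set B := topL z l with hB
    open Polynomial in
    refine ⟨fun i j => (C (A i 0) * P 0 j + X * (C (B i 0) * P 0 j)) +
      (C (A i 1) * P 1 j + X * (C (B i 1) * P 1 j)), ?_, ?_, ?_⟩
    · have key : ∀ (a b : ZMod p) (k j : Fin 2),
          (Polynomial.C a * P k j + Polynomial.X * (Polynomial.C b * P k j)).natDegree
            ≤ w.length + 1 := by
        intro a b k j
        have e1 : (Polynomial.C a * P k j).natDegree ≤ w.length :=
          (Polynomial.natDegree_C_mul_le _ _).trans (h1 k j)
        have e2 : (Polynomial.C b * P k j).natDegree ≤ w.length :=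
          (Polynomial.natDegree_C_mul_le _ _).trans (h1 k j)
        refine Polynomial.natDegree_add_le_of_degree_le (by omega) ?_
        refine Polynomial.natDegree_mul_le.trans ?_
        have : (Polynomial.X : Polynomial (ZMod p)).natDegree ≤ 1 := Polynomial.natDegree_X_le
        omega
      intro i j
      exact Polynomial.natDegree_add_le_of_degree_le (key _ _ _ _) (key _ _ _ _)
    · intro t i j
      rw [List.map_cons, List.prod_cons, Matrix.SpecialLinearGroup.coe_mul, lv_mat,
        ← hA, ← hB, Matrix.mul_apply, Fin.sum_univ_two, ← h2, ← h2]
      simp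
      ring
    · intro i j
      have key : ∀ (a b : ZMod p) (k j : Fin 2),
          (Polynomial.C a * P k j + Polynomial.X * (Polynomial.C b * P k j)).coeff
            (w.length + 1) = b * (P k j).coeff w.length := by
        intro a b k j
        have : (P k j).coeff (w.length + 1) = 0 :=
          Polynomial.coeff_eq_zero_of_natDegree_lt (by have := h1 k j; omega)
        simp [this]
      simp only [List.length_cons, Polynomial.coeff_add (p := _ + _), key, h3, List.map_cons,
        List.prod_cons, Matrix.mul_apply, Fin.sum_univ_two, ← hB]

/-- `z` is good for consecutive letters -/
def GoodPair {p d : ℕ} (z : Fin d × Bool → SL 2 p) (a b : Fin d × Bool) : Prop :=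
  ((z (linv a))⁻¹ * z b : SL 2 p) 1 0 ≠ 0

theorem lsgn_ne {p d : ℕ} [Fact p.Prime] (l : Fin d × Bool) : (lsgn l : ZMod p) ≠ 0 := by
  unfold lsgn; split_ifs <;> simp

theorem top_form {p d : ℕ} [Fact p.Prime] (z : Fin d × Bool → SL 2 p) (w : List (Fin d × Bool))
    (l : Fin d × Bool) (hw : List.IsChain (GoodPair z) (l :: w)) :
    ∃ v : Fin 2 → ZMod p, v ≠ 0 ∧ ((l :: w).map (topL z)).prod =
      Matrix.vecMulVec (fun i => (z l : Matrix (Fin 2) (Fin 2) (ZMod p)) i 0) v := by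
  induction w generalizing l with
  | nil =>
    refine ⟨fun j => lsgn l * ((z (linv l))⁻¹ : SL 2 p) 1 j, ?_, ?_⟩
    · intro h
      set g := (z (linv l))⁻¹
      have e0 : g 1 0 = 0 := by
        have := congrFun h 0; simpa [lsgn_ne] using this
      have e1 : g 1 1 = 0 := by
        have := congrFun h 1; simpa [lsgn_ne] using this
      have := g.det_coe
      rw [Matrix.det_fin_two, e0, e1] at this
      simp at this
    · simp only [List.map_cons, List.map_nil, List.prod_cons, List.prod_nil, mul_one]
      ext i j
      simp [topL, Matrix.vecMulVec_apply, Matrix.mul_apply, Fin.sum_univ_two]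
      ring
  | cons l' w ih =>
    rw [List.isChain_cons_cons] at hw
    obtain ⟨v, hv, hprod⟩ := ih l' hw.2
    refine ⟨(lsgn l * ((z (linv l))⁻¹ * z l' : SL 2 p) 1 0) • v,
      smul_ne_zero (mul_ne_zero (lsgn_ne l) hw.1) hv, ?_⟩
    rw [List.map_cons, List.prod_cons, hprod]
    ext i j
    simp only [topL, Matrix.vecMulVec_apply, Matrix.mul_apply, Fin.sum_univ_two,
      Matrix.smul_apply, Pi.smul_apply, Matrix.SpecialLinearGroup.coe_mul]
    simp
    ring

theorem roots_bound {p : ℕ} [Fact p.Prime] (m : ℕ) (P : Polynomial (ZMod p))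
    (hd : P.natDegree ≤ m) (hc : P.coeff m ≠ 0) (s : Finset (ZMod p))
    (hs : ∀ t ∈ s, P.eval t = 0) : s.card ≤ m := by
  refine le_trans ?_ hd
  refine Polynomial.card_le_degree_of_subset_roots ?_
  intro t ht
  rw [Polynomial.mem_roots (by rintro rfl; simp at hc)]
  exact hs t (by simpa using ht)

open Classical in
theorem good_count {p d : ℕ} [Fact p.Prime] (z : Fin d × Bool → SL 2 p) (w : List (Fin d × Bool))
    (hne : w ≠ []) (hw : List.IsChain (GoodPair z) w) :
    (Finset.univ.filter fun t : ZMod p =>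
      IsSc ((w.map (lv (Sz z t))).prod : Matrix (Fin 2) (Fin 2) (ZMod p))).card ≤ w.length := by
  obtain ⟨P, h1, h2, h3⟩ := word_poly z w
  obtain ⟨l, w', rfl⟩ := List.exists_cons_of_ne_nil hne
  obtain ⟨v, hv, hprod⟩ := top_form z w' l hw
  set u : Fin 2 → ZMod p := (fun i => (z l : Matrix (Fin 2) (Fin 2) (ZMod p)) i 0) with hu
  have hu0 : ¬ (u 0 = 0 ∧ u 1 = 0) := by
    rintro ⟨e0, e1⟩
    have := (z l).det_coe
    rw [Matrix.det_fin_two] at this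
    simp only [hu] at e0 e1
    rw [e0, e1] at this
    simp at this
  have hv0 : ¬ (v 0 = 0 ∧ v 1 = 0) := by
    rintro ⟨e0, e1⟩
    apply hv
    ext i; fin_cases i <;> simp [e0, e1]
  rw [hprod] at h3
  simp only [Matrix.vecMulVec_apply] at h3
  by_cases c1 : u 0 * v 1 = 0
  · by_cases c2 : u 1 * v 0 = 0
    · have c3 : u 0 * v 0 - u 1 * v 1 ≠ 0 := by
        intro c3
        rcases mul_eq_zero.1 c1 with a | a <;> rcases mul_eq_zero.1 c2 with b | b
        · exact hu0 ⟨a, b⟩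
        · rw [a, b] at c3
          have : u 1 * v 1 = 0 := by linear_combination -c3
          rcases mul_eq_zero.1 this with q | q
          · exact hu0 ⟨a, q⟩
          · exact hv0 ⟨b, q⟩
        · rw [a, b] at c3
          have : u 0 * v 0 = 0 := by linear_combination c3
          rcases mul_eq_zero.1 this with q | q
          · exact hu0 ⟨q, b⟩
          · exact hv0 ⟨q, a⟩
        · exact hv0 ⟨b, a⟩
      refine roots_bound _ (P 0 0 - P 1 1) ?_ ?_ _ ?_
      · exact (Polynomial.natDegree_sub_le _ _).trans (max_le (h1 0 0) (h1 1 1))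
      · rw [Polynomial.coeff_sub, h3, h3]; exact c3
      · intro t ht
        have ht := (Finset.mem_filter.1 ht).2.2.2
        rw [Polynomial.eval_sub, h2, h2, ht, sub_self]
    · refine roots_bound _ (P 1 0) (h1 1 0) (by rw [h3]; exact c2) _ ?_
      intro t ht
      have ht := (Finset.mem_filter.1 ht).2.2.1
      rw [h2, ht]
  · refine roots_bound _ (P 0 1) (h1 0 1) (by rw [h3]; exact c1) _ ?_
    intro t ht
    have ht := (Finset.mem_filter.1 ht).2.1
    rw [h2, ht]

end PartA4

section PartA5
set_option linter.unusedSimpArgs false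
open Matrix

open Classical in
theorem bad_pair_card {p d : ℕ} [Fact p.Prime] (α β : Fin d × Bool) (hab : α ≠ β) :
    (Finset.univ.filter fun z : Fin d × Bool → SL 2 p =>
      ((z α)⁻¹ * z β : SL 2 p) 1 0 = 0).card * p ≤ Fintype.card (Fin d × Bool → SL 2 p) := by
  set B := Finset.univ.filter fun z : Fin d × Bool → SL 2 p =>
      ((z α)⁻¹ * z β : SL 2 p) 1 0 = 0 with hB
  have h1 : B.card * p = (B ×ˢ (Finset.univ : Finset (ZMod p))).card := by
    rw [Finset.card_product, Finset.card_univ, ZMod.card]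
  rw [h1, ← Finset.card_univ]
  refine Finset.card_le_card_of_injOn
    (fun x => Function.update x.1 β (x.1 β * loM x.2)) (by intro x _; simp) ?_
  rintro ⟨z, s⟩ hz ⟨z', s'⟩ hz' heq
  simp only [Finset.coe_product, Set.mem_prod, hB, Finset.coe_filter, Finset.mem_univ, true_and,
    Set.mem_ofPred_eq, Finset.coe_univ, Set.mem_univ, and_true] at hz hz'
  simp only at heq
  have hα : z α = z' α := by
    have := congrFun heq α
    simpa [hab] using this
  have hβ : z β * loM s = z' β * loM s' := by
    have := congrFun heq β
    simpa using this
  set g : SL 2 p := (z α)⁻¹ * z β with hg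
  set g' : SL 2 p := (z' α)⁻¹ * z' β with hg'
  have hgg : g * loM s = g' * loM s' := by
    rw [hg, hg', mul_assoc, hβ, hα, mul_assoc]
  have e0 := congrArg (fun h : SL 2 p => h.1 1 0) hgg
  have e1 := congrArg (fun h : SL 2 p => h.1 1 1) hgg
  simp [Matrix.SpecialLinearGroup.coe_mul, Matrix.mul_apply, Fin.sum_univ_two, loM_coe,
    hz, hz', -mul_eq_mul_right_iff, -mul_eq_mul_left_iff] at e0 e1
  have hne : g.1 1 1 ≠ 0 := by
    intro h
    have := g.det_coe
    rw [Matrix.det_fin_two, hz, h] at this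
    simp at this
  have hs : s = s' := by
    rw [← e1] at e0
    exact mul_left_cancel₀ hne e0
  subst hs
  have hβ' : z β = z' β := mul_right_cancel hβ
  have : z = z' := by
    ext1 x
    by_cases hx : x = β
    · rw [hx, hβ']
    · have := congrFun heq x
      simpa [hx] using this
  rw [this]

/-- for fixed `t` the parametrization is uniform -/
def SzEquiv {p : ℕ} (d : ℕ) (t : ZMod p) :
    (Fin d × Bool → SL 2 p) ≃ (Fin d → SL 2 p) × (Fin d → SL 2 p) where
  toFun z := (Sz z t, fun i => z (i, true))
  invFun x := fun l => if l.2 then x.2 l.1 else (x.1 l.1)⁻¹ * x.2 l.1 * upM t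
  left_inv z := by
    ext1 ⟨i, b⟩
    cases b
    · simp [Sz, mul_assoc]
    · simp
  right_inv x := by
    refine Prod.ext ?_ ?_
    · ext1 i; simp [Sz]
    · ext1 i; simp

open Classical in
theorem bad_z_card {p d : ℕ} [Fact p.Prime] (w : List (Fin d × Bool))
    (hw : List.IsChain (fun a b => b ≠ linv a) w) :
    (Finset.univ.filter fun z : Fin d × Bool → SL 2 p =>
      ¬ List.IsChain (GoodPair z) w).card * p ≤
        w.length * Fintype.card (Fin d × Bool → SL 2 p) := by
  induction w with
  | nil => simp
  | cons l w ih =>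
    cases w with
    | nil => simp
    | cons l' w =>
      rw [List.isChain_cons_cons] at hw
      have h1 := ih hw.2
      have h2 := bad_pair_card (p := p) (linv l) l' (Ne.symm hw.1)
      have hsub : (Finset.univ.filter fun z : Fin d × Bool → SL 2 p =>
          ¬ List.IsChain (GoodPair z) (l :: l' :: w)) ⊆
          (Finset.univ.filter fun z : Fin d × Bool → SL 2 p =>
            ((z (linv l))⁻¹ * z l' : SL 2 p) 1 0 = 0) ∪
          (Finset.univ.filter fun z : Fin d × Bool → SL 2 p =>
          ¬ List.IsChain (GoodPair z) (l' :: w)) := by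
        intro z hz
        simp only [Finset.mem_filter, Finset.mem_univ, true_and, Finset.mem_union,
          List.isChain_cons_cons, GoodPair] at hz ⊢
        tauto
      have h3 := (Finset.card_le_card hsub).trans (Finset.card_union_le _ _)
      have h4 := Nat.mul_le_mul_right p h3
      rw [add_mul] at h4
      refine h4.trans ((add_le_add h2 h1).trans ?_)
      simp only [List.length_cons]
      apply le_of_eq
      ring

open Classical in
theorem word_scalar_card {p d : ℕ} [Fact p.Prime] (w : List (Fin d × Bool)) (hne : w ≠ [])
    (hw : List.IsChain (fun a b => b ≠ linv a) w) :
    (Finset.univ.filter fun S : Fin d → SL 2 p =>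
      IsSc ((w.map (lv S)).prod : SL 2 p).1).card * p ≤
        2 * w.length * Fintype.card (Fin d → SL 2 p) := by
  set N := (Finset.univ.filter fun S : Fin d → SL 2 p =>
      IsSc ((w.map (lv S)).prod : SL 2 p).1).card with hN
  set q := Fintype.card (Fin d → SL 2 p) with hq
  have hqpos : 0 < q := Fintype.card_pos
  have hL : Fintype.card (Fin d × Bool → SL 2 p) = q * q := by
    rw [Fintype.card_congr (SzEquiv d (0 : ZMod p)), Fintype.card_prod]
  -- count pairs (z, t)
  have h1 : ∀ t : ZMod p, (Finset.univ.filter fun z : Fin d × Bool → SL 2 p =>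
      IsSc ((w.map (lv (Sz z t))).prod : SL 2 p).1).card = N * q := by
    intro t
    rw [hN, hq, ← Finset.card_univ, ← Finset.card_product]
    refine Finset.card_equiv (SzEquiv d t) ?_
    intro z
    simp [SzEquiv]
  have h2 : ∑ t : ZMod p, (Finset.univ.filter fun z : Fin d × Bool → SL 2 p =>
      IsSc ((w.map (lv (Sz z t))).prod : SL 2 p).1).card = p * (N * q) := by
    simp [h1, ZMod.card]
  have h3 : ∑ t : ZMod p, (Finset.univ.filter fun z : Fin d × Bool → SL 2 p =>
      IsSc ((w.map (lv (Sz z t))).prod : SL 2 p).1).card =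
      ∑ z : Fin d × Bool → SL 2 p, (Finset.univ.filter fun t : ZMod p =>
      IsSc ((w.map (lv (Sz z t))).prod : SL 2 p).1).card := by
    simp only [Finset.card_filter]
    rw [Finset.sum_comm]
  have h4 : ∀ z : Fin d × Bool → SL 2 p, (Finset.univ.filter fun t : ZMod p =>
      IsSc ((w.map (lv (Sz z t))).prod : SL 2 p).1).card ≤
      w.length + (if ¬ List.IsChain (GoodPair z) w then 1 else 0) * p := by
    intro z
    by_cases hz : List.IsChain (GoodPair z) w
    · simpa [hz] using good_count z w hne hz
    · simp only [hz, not_false_eq_true, if_true, one_mul]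
      calc _ ≤ (Finset.univ : Finset (ZMod p)).card := Finset.card_le_card (Finset.filter_subset _ _)
        _ = p := by simp [ZMod.card]
        _ ≤ _ := by omega
  have h5 : p * (N * q) ≤ w.length * (q * q) + w.length * (q * q) := by
    rw [← h2, h3]
    refine (Finset.sum_le_sum fun z _ => h4 z).trans ?_
    rw [Finset.sum_add_distrib, ← Finset.sum_mul, ← Finset.card_filter]
    have := bad_z_card (p := p) w hw
    rw [hL] at this
    refine add_le_add ?_ this
    simp only [Finset.sum_const, Finset.card_univ, hL, smul_eq_mul]
    exact le_of_eq (mul_comm _ _)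
  have h6 : (N * p) * q ≤ (2 * w.length * q) * q := by nlinarith
  exact Nat.le_of_mul_le_mul_right h6 hqpos

/-- Averaged character ratio over a reduced word. -/
theorem word_char_sum {p d : ℕ} [Fact p.Prime] (hp3 : 3 ≤ p) {n : ℕ}
    (π : SL 2 p →* Matrix.unitaryGroup (Fin n) ℂ) (hπ : IsIrreducibleRep π)
    (hnt : ∃ g, π g ≠ 1) (w : List (Fin d × Bool)) (hne : w ≠ [])
    (hw : List.IsChain (fun a b => b ≠ linv a) w) :
    (∑ S : Fin d → SL 2 p, ‖(π ((w.map (lv S)).prod) : Matrix (Fin n) (Fin n) ℂ).trace‖)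
      * Real.sqrt p ≤ 8 * w.length * n * Fintype.card (Fin d → SL 2 p) := by
  classical
  have hcard := word_scalar_card (p := p) w hne hw
  set N := (Finset.univ.filter fun S : Fin d → SL 2 p =>
      IsSc ((w.map (lv S)).prod : SL 2 p).1).card with hN
  set q := Fintype.card (Fin d → SL 2 p) with hq
  have h1 : ∀ S : Fin d → SL 2 p,
      ‖(π ((w.map (lv S)).prod) : Matrix (Fin n) (Fin n) ℂ).trace‖ * Real.sqrt p ≤
      6 * n + (if IsSc ((w.map (lv S)).prod : SL 2 p).1 then 1 else 0) * (n * Real.sqrt p) := by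
    intro S
    by_cases hS : IsSc ((w.map (lv S)).prod : SL 2 p).1
    · simp only [hS, if_true, one_mul]
      have := norm_trace_le π ((w.map (lv S)).prod)
      have h2 := mul_le_mul_of_nonneg_right this (Real.sqrt_nonneg p)
      have : (0 : ℝ) ≤ 6 * n := by positivity
      linarith
    · simp only [hS, if_false, zero_mul, add_zero]
      exact char_ratio hp3 π hπ hnt _ hS
  rw [Finset.sum_mul]
  refine (Finset.sum_le_sum fun S _ => h1 S).trans ?_
  have hsb : ∑ S : Fin d → SL 2 p, (if IsSc ((w.map (lv S)).prod : SL 2 p).1 then (1 : ℝ) else 0)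
      * (n * Real.sqrt p) = N * (n * Real.sqrt p) := by
    rw [← Finset.sum_mul, Finset.sum_boole, ← hN]
  rw [Finset.sum_add_distrib, hsb]
  simp only [Finset.sum_const, Finset.card_univ, nsmul_eq_mul, ← hq]
  have hlen : (1 : ℝ) ≤ w.length := by
    have := List.length_pos_iff.2 hne
    exact_mod_cast this
  have hs : 1 ≤ Real.sqrt p := by
    rw [Real.one_le_sqrt]
    have : 1 ≤ p := by omega
    exact_mod_cast this
  have hss : Real.sqrt p * Real.sqrt p = p := Real.mul_self_sqrt (by positivity)
  have hc : (N : ℝ) * p ≤ 2 * w.length * q := by exact_mod_cast hcard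
  have hc2 : (N : ℝ) * Real.sqrt p ≤ 2 * w.length * q := by
    refine le_trans ?_ hc
    gcongr
    nlinarith
  have hnn : (0 : ℝ) ≤ n := by positivity
  have hqq : (0 : ℝ) ≤ q := by positivity
  have e1 : (N : ℝ) * (n * Real.sqrt p) ≤ 2 * w.length * q * n := by
    calc (N : ℝ) * (n * Real.sqrt p) = (N * Real.sqrt p) * n := by ring
      _ ≤ _ := by gcongr
  have e2 : (q : ℝ) * (6 * n) ≤ 6 * w.length * q * n := by
    have := mul_le_mul_of_nonneg_right hlen (mul_nonneg hqq hnn)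
    nlinarith
  exact (add_le_add e2 e1).trans (le_of_eq (by ring))

end PartA5

section PartA6
set_option linter.unusedSimpArgs false
open Matrix

/-- Reduced words of length `m+1` starting with letter `l`. -/
noncomputable def redW {d : ℕ} : ℕ → Fin d × Bool → List (List (Fin d × Bool))
  | 0, l => [[l]]
  | m + 1, l => ((Finset.univ.filter fun l' : Fin d × Bool => l' ≠ linv l).toList).flatMap
      fun l' => (redW m l').map (List.cons l)

theorem redW_spec {d : ℕ} (m : ℕ) : ∀ (l : Fin d × Bool), ∀ w ∈ redW m l,
    w.length = m + 1 ∧ w.head? = some l ∧ List.IsChain (fun a b => b ≠ linv a) w := by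
  induction m with
  | zero => intro l w hw; simp [redW] at hw; subst hw; simp
  | succ m ih =>
    intro l w hw
    simp only [redW, List.mem_flatMap, Finset.mem_toList, Finset.mem_filter, Finset.mem_univ,
      true_and, List.mem_map] at hw
    obtain ⟨l', hl', w', hw', rfl⟩ := hw
    obtain ⟨h1, h2, h3⟩ := ih l' w' hw'
    refine ⟨by simp [h1], by simp, ?_⟩
    cases w' with
    | nil => simp at h1
    | cons a w' =>
      simp at h2
      subst h2
      exact List.isChain_cons_cons.2 ⟨hl', h3⟩

/-- Recursion for reduced word sums -/
def redB {R : Type*} [Ring R] {d : ℕ} (g : Fin d × Bool → R) : ℕ → Fin d × Bool → R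
  | 0, l => g l
  | m + 1, l => g l * (∑ l', redB g m l' - redB g m (linv l))

theorem redB_eq {R : Type*} [Ring R] {d : ℕ} (g : Fin d × Bool → R) (m : ℕ) :
    ∀ l, redB g m l = ((redW m l).map fun w => (w.map g).prod).sum := by
  induction m with
  | zero => intro l; simp [redB, redW]
  | succ m ih =>
    intro l
    have h : ∑ l', redB g m l' - redB g m (linv l) =
        ∑ l' ∈ Finset.univ.filter (fun l' : Fin d × Bool => l' ≠ linv l), redB g m l' := by
      rw [Finset.filter_ne', Finset.sum_erase_eq_sub (Finset.mem_univ _)]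
    rw [redB, h, redW, List.map_flatMap, List.flatMap, List.sum_flatten, List.map_map, Finset.sum_map_toList, Finset.mul_sum]
    refine Finset.sum_congr rfl fun l' _ => ?_
    simp only [Function.comp]
    rw [ih, ← List.sum_map_mul_left, List.map_map]
    congr 1

theorem redW_length {d : ℕ} (m : ℕ) : ∀ l : Fin d × Bool, (redW m l).length ≤ (2 * d) ^ m := by
  induction m with
  | zero => intro l; simp [redW]
  | succ m ih =>
    intro l
    rw [redW, List.length_flatMap, Finset.sum_map_toList]
    refine (Finset.sum_le_card_nsmul _ _ ((2 * d) ^ m) fun l' _ => by simpa using ih l').trans ?_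
    rw [smul_eq_mul, pow_succ']
    gcongr
    refine (Finset.card_le_univ _).trans ?_
    simp [mul_comm]

/-- Geronimus polynomials; `geroP d m`. -/
noncomputable def geroP (d : ℕ) : ℕ → Polynomial ℝ
  | 0 => 1
  | 1 => Polynomial.X
  | 2 => Polynomial.X ^ 2 - Polynomial.C (2 * (d : ℝ))
  | m + 3 => Polynomial.X * geroP d (m + 2) - Polynomial.C (2 * (d : ℝ) - 1) * geroP d (m + 1)

theorem gero_redB {R : Type*} [Ring R] [Algebra ℝ R] {d : ℕ} (g : Fin d × Bool → R)
    (hg : ∀ l, g l * g (linv l) = 1) (m : ℕ) :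
    ∑ l, redB g m l = Polynomial.aeval (∑ l, g l) (geroP d (m + 1)) := by
  have hbij : Function.Bijective (linv : Fin d × Bool → _) :=
    (Function.Involutive.bijective (f := linv) (fun l => linv_linv l))
  have key : ∀ m, ∑ l, redB g (m + 1) l =
      (∑ l, g l) * (∑ l, redB g m l) - ∑ l, g l * redB g m (linv l) := by
    intro m
    simp only [redB, mul_sub, Finset.sum_sub_distrib, Finset.sum_mul]
  have key2 : ∀ m, ∑ l, g l * redB g (m + 1) (linv l) =
      (2 * (d : R) - 1) * ∑ l, redB g m l := by
    intro m
    have : ∀ l, g l * redB g (m + 1) (linv l) = ∑ l', redB g m l' - redB g m l := by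
      intro l
      rw [redB, ← mul_assoc, hg, one_mul, linv_linv]
    simp only [this, Finset.sum_sub_distrib, Finset.sum_const, Finset.card_univ,
      Fintype.card_prod, Fintype.card_fin, Fintype.card_bool, nsmul_eq_mul]
    rw [sub_mul, one_mul]
    push_cast
    rw [Nat.cast_comm d (2 : R)]
  have key0 : ∑ l, g l * redB g 0 (linv l) = 2 * (d : R) := by
    simp only [redB, hg]
    simp [Nat.cast_comm d (2 : R)]
  induction m using Nat.strong_induction_on with
  | _ m ih =>
    match m with
    | 0 => simp [redB, geroP]
    | 1 => rw [key, key0]; simp [redB, geroP, sq, map_ofNat]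
    | m + 2 =>
      rw [key, key2, ih (m + 1) (by omega), ih m (by omega)]
      simp [geroP, map_ofNat]

theorem Amat_eq {G : Type*} [Group G] {n d : ℕ}
    (π : G →* Matrix.unitaryGroup (Fin n) ℂ) (S : Fin d → G) :
    Amat π S = ∑ l : Fin d × Bool, (π (lv S l) : Matrix (Fin n) (Fin n) ℂ) := by
  rw [Amat, Fintype.sum_prod_type]
  refine Finset.sum_congr rfl fun i _ => ?_
  have h : ((π (S i)) : Matrix (Fin n) (Fin n) ℂ)⁻¹ = (π (S i)⁻¹ : Matrix (Fin n) (Fin n) ℂ) := by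
    refine Matrix.inv_eq_right_inv ?_
    rw [← Matrix.UnitaryGroup.mul_val, ← map_mul]
    simp
  simp [lv, h]

theorem gero_trace_sum {p d : ℕ} [Fact p.Prime] (hp3 : 3 ≤ p) {n : ℕ}
    (π : SL 2 p →* Matrix.unitaryGroup (Fin n) ℂ) (hπ : IsIrreducibleRep π)
    (hnt : ∃ g, π g ≠ 1) (m : ℕ) :
    (∑ S : Fin d → SL 2 p, ‖(Polynomial.aeval (Amat π S) (geroP d (m + 1))).trace‖)
      * Real.sqrt p ≤ (2 * d) ^ (m + 1) * (8 * (m + 1) * n * Fintype.card (Fin d → SL 2 p)) := by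
  have h1 : ∀ S : Fin d → SL 2 p,
      ‖(Polynomial.aeval (Amat π S) (geroP d (m + 1))).trace‖ ≤
      ∑ l : Fin d × Bool, ((redW m l).map fun w =>
        ‖(π ((w.map (lv S)).prod) : Matrix (Fin n) (Fin n) ℂ).trace‖).sum := by
    intro S
    rw [Amat_eq, ← gero_redB (fun l => (π (lv S l) : Matrix (Fin n) (Fin n) ℂ)), Matrix.trace_sum]
    · refine (norm_sum_le _ _).trans (Finset.sum_le_sum fun l _ => ?_)
      rw [redB_eq]
      have e : ∀ L : List (List (Fin d × Bool)),
          ‖((L.map fun w : List (Fin d × Bool) => (w.map fun l => (π (lv S l) : Matrix (Fin n) (Fin n) ℂ)).prod).sum).trace‖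
          ≤ (L.map fun w =>
        ‖(π ((w.map (lv S)).prod) : Matrix (Fin n) (Fin n) ℂ).trace‖).sum := by
        intro L
        induction L with
        | nil => simp
        | cons w L ih =>
          simp only [List.map_cons, List.sum_cons, Matrix.trace_add]
          refine (norm_add_le _ _).trans (add_le_add (le_of_eq ?_) ih)
          congr 2
          clear ih
          induction w with
          | nil => simp
          | cons a w ih2 => simp [ih2]
      exact e _
    · intro l
      rw [lv_linv, ← Matrix.UnitaryGroup.mul_val, ← map_mul]
      simp
  have h2 : ∀ l : Fin d × Bool, (∑ S : Fin d → SL 2 p, ((redW m l).map fun w =>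
        ‖(π ((w.map (lv S)).prod) : Matrix (Fin n) (Fin n) ℂ).trace‖).sum) * Real.sqrt p ≤
        (2 * d) ^ m * (8 * (m + 1) * n * Fintype.card (Fin d → SL 2 p)) := by
    intro l
    have e : ∀ L : List (List (Fin d × Bool)), (∀ w ∈ L, w.length = m + 1 ∧
        List.IsChain (fun a b => b ≠ linv a) w) →
        (∑ S : Fin d → SL 2 p, (L.map fun w =>
        ‖(π ((w.map (lv S)).prod) : Matrix (Fin n) (Fin n) ℂ).trace‖).sum) * Real.sqrt p ≤
        L.length * (8 * (m + 1) * n * Fintype.card (Fin d → SL 2 p)) := by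
      intro L hL
      induction L with
      | nil => simp
      | cons w L ih =>
        simp only [List.map_cons, List.sum_cons, Finset.sum_add_distrib, add_mul]
        have i1 := ih fun w hw => hL w (List.mem_cons_of_mem _ hw)
        obtain ⟨j1, j2⟩ := hL w List.mem_cons_self
        have i2 := word_char_sum hp3 π hπ hnt w (by rintro rfl; simp at j1) j2
        rw [j1] at i2
        push_cast at i2 ⊢
        rw [List.length_cons]
        push_cast
        rw [add_mul, add_comm, one_mul]
        linarith
    refine (e (redW m l) fun w hw => ⟨(redW_spec m l w hw).1, (redW_spec m l w hw).2.2⟩).trans ?_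
    have := redW_length m l
    gcongr
    exact_mod_cast this
  calc _ ≤ (∑ S : Fin d → SL 2 p, ∑ l : Fin d × Bool, ((redW m l).map fun w =>
        ‖(π ((w.map (lv S)).prod) : Matrix (Fin n) (Fin n) ℂ).trace‖).sum) * Real.sqrt p := by
        gcongr with S; exact h1 S
    _ = ∑ l : Fin d × Bool, (∑ S : Fin d → SL 2 p, ((redW m l).map fun w =>
        ‖(π ((w.map (lv S)).prod) : Matrix (Fin n) (Fin n) ℂ).trace‖).sum) * Real.sqrt p := by
        rw [Finset.sum_comm, Finset.sum_mul]
    _ ≤ ∑ l : Fin d × Bool, (2 * d : ℝ) ^ m * (8 * (m + 1) * n * Fintype.card (Fin d → SL 2 p)) :=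
        Finset.sum_le_sum fun l _ => h2 l
    _ = _ := by
        simp only [Finset.sum_const, Finset.card_univ, Fintype.card_prod, Fintype.card_fin,
          Fintype.card_bool, nsmul_eq_mul]
        push_cast
        ring

end PartA6

section PartA7
set_option linter.unusedSimpArgs false
open Matrix MeasureTheory

theorem Amat_herm {G : Type*} [Group G] {n d : ℕ}
    (π : G →* Matrix.unitaryGroup (Fin n) ℂ) (S : Fin d → G) : (Amat π S).IsHermitian := by
  rw [Matrix.IsHermitian, Amat_eq, Matrix.conjTranspose_sum]
  have h : ∀ l : Fin d × Bool, (π (lv S l) : Matrix (Fin n) (Fin n) ℂ)ᴴ =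
      (π (lv S (linv l)) : Matrix (Fin n) (Fin n) ℂ) := by
    intro l
    rw [lv_linv, map_inv]
    rfl
  simp only [h]
  exact Function.Bijective.sum_comp
    (Function.Involutive.bijective (f := linv) (fun l => linv_linv l))
    (fun l => (π (lv S l) : Matrix (Fin n) (Fin n) ℂ))

theorem unitary_norm_mulVec {n : ℕ} (U : Matrix.unitaryGroup (Fin n) ℂ)
    (v : EuclideanSpace ℂ (Fin n)) :
    ‖WithLp.toLp 2 ((U : Matrix (Fin n) (Fin n) ℂ) *ᵥ v.ofLp)‖ = ‖v‖ := by
  have h := Matrix.UnitaryGroup.star_mul_self U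
  have : ∀ w : EuclideanSpace ℂ (Fin n), ‖w‖ ^ 2 = RCLike.re (star w.ofLp ⬝ᵥ w.ofLp) := by
    intro w
    rw [EuclideanSpace.norm_sq_eq, dotProduct]
    simp [RCLike.star_def, ← Complex.normSq_eq_norm_sq, Complex.normSq_apply]
  have h2 : ‖WithLp.toLp 2 ((U : Matrix (Fin n) (Fin n) ℂ) *ᵥ v.ofLp)‖ ^ 2 = ‖v‖ ^ 2 := by
    rw [this, this]
    congr 1
    simp only
    rw [Matrix.star_mulVec, Matrix.dotProduct_mulVec, Matrix.vecMul_vecMul]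
    have : (U : Matrix (Fin n) (Fin n) ℂ)ᴴ * (U : Matrix (Fin n) (Fin n) ℂ) = 1 := h
    rw [this, Matrix.vecMul_one]
  exact (sq_eq_sq₀ (norm_nonneg _) (norm_nonneg _)).1 h2

theorem Amat_eig {G : Type*} [Group G] {n d : ℕ}
    (π : G →* Matrix.unitaryGroup (Fin n) ℂ) (S : Fin d → G) (j : Fin n) :
    |(Amat_herm π S).eigenvalues j| ≤ 2 * d := by
  set v := (Amat_herm π S).eigenvectorBasis j with hv
  have h1 : ‖v‖ = 1 := (Amat_herm π S).eigenvectorBasis.orthonormal.1 j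
  have h2 := (Amat_herm π S).mulVec_eigenvectorBasis j
  have h3 : ‖WithLp.toLp 2 (Amat π S *ᵥ v.ofLp)‖ ≤ 2 * d := by
    rw [Amat_eq, Matrix.sum_mulVec, WithLp.toLp_sum]
    refine (norm_sum_le _ _).trans ?_
    simp only [unitary_norm_mulVec, h1]
    simp [mul_comm]
  rw [← hv] at h2
  rw [h2] at h3
  have : ‖WithLp.toLp 2 ((Amat_herm π S).eigenvalues j • v.ofLp)‖ =
      |(Amat_herm π S).eigenvalues j| := by
    have : WithLp.toLp 2 ((Amat_herm π S).eigenvalues j • v.ofLp) =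
      (Amat_herm π S).eigenvalues j • v := rfl
    rw [this, norm_smul, h1, mul_one, Real.norm_eq_abs]
  rwa [this] at h3

theorem herm_trace_aeval {n : ℕ} {A : Matrix (Fin n) (Fin n) ℂ} (hA : A.IsHermitian)
    (P : Polynomial ℝ) :
    (Polynomial.aeval A P).trace = ∑ j, ((P.eval (hA.eigenvalues j) : ℝ) : ℂ) := by
  have hpow : ∀ k : ℕ, (A ^ k).trace = ∑ j, (((hA.eigenvalues j) ^ k : ℝ) : ℂ) := by
    intro k
    set U := hA.eigenvectorUnitary
    have hs := hA.spectral_theorem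
    have : A ^ k = (U : Matrix (Fin n) (Fin n) ℂ) *
        (diagonal (RCLike.ofReal ∘ hA.eigenvalues : Fin n → ℂ)) ^ k *
        star (U : Matrix (Fin n) (Fin n) ℂ) := by
      conv_lhs => rw [hs]
      rw [← map_pow, Unitary.conjStarAlgAut_apply]
    rw [this, Matrix.trace_mul_comm, ← mul_assoc]
    have hu : star (U : Matrix (Fin n) (Fin n) ℂ) * (U : Matrix (Fin n) (Fin n) ℂ) = 1 :=
      Matrix.UnitaryGroup.star_mul_self U
    rw [hu, one_mul, Matrix.diagonal_pow, Matrix.trace_diagonal]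
    simp
  induction P using Polynomial.induction_on' with
  | add p q hp hq => simp [hp, hq, Finset.sum_add_distrib, Matrix.trace_add]
  | monomial k a =>
    rw [Polynomial.aeval_monomial, ← Algebra.smul_def, Matrix.trace_smul, hpow, Finset.smul_sum]
    refine Finset.sum_congr rfl fun j _ => ?_
    simp

theorem specMeasure_eq {n : ℕ} {A : Matrix (Fin n) (Fin n) ℂ} (hA : A.IsHermitian) :
    specMeasure A = (n : ENNReal)⁻¹ • ∑ j : Fin n, Measure.dirac (hA.eigenvalues j) := by
  rw [specMeasure, dif_pos hA]

theorem specMeasure_prob {n : ℕ} (hn : 0 < n) {A : Matrix (Fin n) (Fin n) ℂ}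
    (hA : A.IsHermitian) : IsProbabilityMeasure (specMeasure A) := by
  rw [specMeasure_eq hA]
  constructor
  simp only [Measure.smul_apply, Measure.finsetSum_apply, measure_univ]
  simp
  exact ENNReal.inv_mul_cancel (by exact_mod_cast hn.ne') (by simp)

theorem specMeasure_integral {n : ℕ} {A : Matrix (Fin n) (Fin n) ℂ}
    (hA : A.IsHermitian) (f : ℝ → ℝ) :
    ∫ x, f x ∂(specMeasure A) = (n : ℝ)⁻¹ * ∑ j, f (hA.eigenvalues j) := by
  rw [specMeasure_eq hA, integral_smul_measure, integral_finsetSum_measure]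
  · simp
  · intro i _
    exact integrable_dirac (by simp)

theorem specMeasure_supp {G : Type*} [Group G] {n d : ℕ}
    (π : G →* Matrix.unitaryGroup (Fin n) ℂ) (S : Fin d → G) :
    specMeasure (Amat π S) (Set.Icc (-(2 * d : ℝ)) (2 * d))ᶜ = 0 := by
  rw [specMeasure_eq (Amat_herm π S)]
  simp only [Measure.smul_apply, Measure.finsetSum_apply]
  rw [Finset.sum_eq_zero]
  · simp
  · intro j _
    have := abs_le.1 (Amat_eig π S j)
    rw [Measure.dirac_apply, Set.indicator_of_notMem]
    exact fun h => h ⟨by linarith [this.1], this.2⟩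

theorem spec_gero {p d : ℕ} [Fact p.Prime] (hp3 : 3 ≤ p) {n : ℕ} (hn : 0 < n)
    (π : SL 2 p →* Matrix.unitaryGroup (Fin n) ℂ) (hπ : IsIrreducibleRep π)
    (hnt : ∃ g, π g ≠ 1) (m : ℕ) :
    (∑ S : Fin d → SL 2 p, |∫ x, (geroP d (m + 1)).eval x ∂(specMeasure (Amat π S))|)
      * Real.sqrt p ≤ (2 * d) ^ (m + 1) * (8 * (m + 1) * Fintype.card (Fin d → SL 2 p)) := by
  have h := gero_trace_sum (d := d) hp3 π hπ hnt m
  have h1 : ∀ S : Fin d → SL 2 p, |∫ x, (geroP d (m + 1)).eval x ∂(specMeasure (Amat π S))| =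
      (n : ℝ)⁻¹ * ‖(Polynomial.aeval (Amat π S) (geroP d (m + 1))).trace‖ := by
    intro S
    rw [specMeasure_integral (Amat_herm π S), herm_trace_aeval (Amat_herm π S),
      ← Complex.ofReal_sum, Complex.norm_real, Real.norm_eq_abs, abs_mul,
      abs_of_nonneg (by positivity : (0 : ℝ) ≤ (n : ℝ)⁻¹)]
  simp only [h1, ← Finset.mul_sum]
  have hn' : (0 : ℝ) < n := by exact_mod_cast hn
  rw [mul_assoc, inv_mul_le_iff₀ hn']
  refine h.trans (le_of_eq ?_)
  ring

end PartA7

section PartB1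
set_option linter.unusedSimpArgs false
open MeasureTheory intervalIntegral

/-- denominators -/
noncomputable def kE (q θ : ℝ) : ℝ := q ^ 2 + 1 - 2 * q * Real.cos (2 * θ)

theorem kE_pos {q : ℝ} (hq : 3 ≤ q) (θ : ℝ) : 1 ≤ kE q θ := by
  unfold kE
  have := Real.cos_le_one (2 * θ)
  nlinarith

theorem kE_cont (q : ℝ) : Continuous (kE q) := by unfold kE; fun_prop

/-- Fourier coefficients of the Poisson kernel -/
noncomputable def kI (q : ℝ) (j : ℕ) : ℝ := ∫ θ in (0 : ℝ)..Real.pi, Real.cos (j * θ) / kE q θ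

theorem kI_cont {q : ℝ} (hq : 3 ≤ q) (f : ℝ → ℝ) (hf : Continuous f) :
    Continuous (fun θ => f θ / kE q θ) :=
  hf.div (kE_cont q) fun θ => by linarith [kE_pos hq θ]

theorem kI_bound {q : ℝ} (hq : 3 ≤ q) (j : ℕ) : |kI q j| ≤ Real.pi := by
  have := norm_integral_le_of_norm_le_const (a := 0) (b := Real.pi) (C := 1)
    (f := fun θ => Real.cos (j * θ) / kE q θ) (by
      intro θ _
      rw [norm_div, Real.norm_eq_abs, Real.norm_eq_abs]
      have h1 := kE_pos hq θ
      rw [abs_of_pos (by linarith : 0 < kE q θ), div_le_one (by linarith)]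
      exact (Real.abs_cos_le_one _).trans h1)
  simpa [kI, abs_of_pos Real.pi_pos] using this

theorem int_cos (j : ℕ) : ∫ θ in (0 : ℝ)..Real.pi, Real.cos ((j + 1 : ℕ) * θ) = 0 := by
  rw [intervalIntegral.integral_comp_mul_left (fun x => Real.cos x) (by positivity)]
  rw [integral_cos]
  rw [Real.sin_nat_mul_pi]; simp

theorem kI_rec {q : ℝ} (hq : 3 ≤ q) (j : ℕ) :
    (q ^ 2 + 1) * kI q (j + 2) - q * (kI q (j + 4) + kI q j) = 0 := by
  have h := int_cos (j + 1)
  have hc : ∀ i : ℕ, IntervalIntegrable (fun θ => Real.cos (i * θ) / kE q θ) volume 0 Real.pi :=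
    fun i => (kI_cont hq _ (by fun_prop)).intervalIntegrable _ _
  rw [← h]
  unfold kI
  rw [← intervalIntegral.integral_add (hc _) (hc _), ← intervalIntegral.integral_const_mul,
    ← intervalIntegral.integral_const_mul, ← intervalIntegral.integral_sub]
  · refine intervalIntegral.integral_congr fun θ _ => ?_
    have hE := kE_pos hq θ
    have hE0 : kE q θ ≠ 0 := by linarith
    have e1 : (↑(j + 4) : ℝ) * θ = ((j + 2 : ℕ) : ℝ) * θ + 2 * θ := by push_cast; ring
    have e2 : (j : ℝ) * θ = ((j + 2 : ℕ) : ℝ) * θ - 2 * θ := by push_cast; ring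
    have e3 : ((j + 1 + 1 : ℕ) : ℝ) = ((j + 2 : ℕ) : ℝ) := rfl
    have hk : kE q θ = q ^ 2 + 1 - 2 * q * Real.cos (2 * θ) := rfl
    rw [e1, e2, e3, Real.cos_add, Real.cos_sub]
    generalize Real.cos ((j + 2 : ℕ) * θ) = a
    generalize Real.sin ((j + 2 : ℕ) * θ) = b
    generalize Real.cos (2 * θ) = x at *
    generalize Real.sin (2 * θ) = y at *
    generalize kE q θ = K at *
    field_simp
    rw [hk]
    ring
  · exact (hc _).const_mul _
  · exact ((hc _).add (hc _)).const_mul _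

theorem kI_zero {q : ℝ} (hq : 3 ≤ q) : (q ^ 2 + 1) * kI q 0 - 2 * q * kI q 2 = Real.pi := by
  have hc : ∀ i : ℕ, IntervalIntegrable (fun θ => Real.cos (i * θ) / kE q θ) volume 0 Real.pi :=
    fun i => (kI_cont hq _ (by fun_prop)).intervalIntegrable _ _
  have h : Real.pi = ∫ θ in (0 : ℝ)..Real.pi, (1 : ℝ) := by simp
  conv_rhs => rw [h]
  unfold kI
  rw [← intervalIntegral.integral_const_mul,
    ← intervalIntegral.integral_const_mul, ← intervalIntegral.integral_sub]
  · refine intervalIntegral.integral_congr fun θ _ => ?_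
    have hE := kE_pos hq θ
    have hE0 : kE q θ ≠ 0 := by linarith
    have hk : kE q θ = q ^ 2 + 1 - 2 * q * Real.cos (2 * θ) := rfl
    simp only [Nat.cast_zero, zero_mul, Real.cos_zero, Nat.cast_ofNat]
    generalize Real.cos (2 * θ) = x at *
    generalize kE q θ = K at *
    field_simp
    rw [hk]
    ring
  · exact (hc _).const_mul _
  · exact (hc _).const_mul _

theorem kI_step {q : ℝ} (hq : 3 ≤ q) (j : ℕ) : q * kI q (j + 2) = kI q j := by
  by_contra hne
  have hk : ∀ k : ℕ, q * kI q (j + 2 * k + 2) - kI q (j + 2 * k) =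
      q ^ k * (q * kI q (j + 2) - kI q j) := by
    intro k
    induction k with
    | zero => simp
    | succ k ih =>
      have := kI_rec hq (j + 2 * k)
      rw [pow_succ', mul_assoc, ← ih]
      have e1 : j + 2 * (k + 1) + 2 = j + 2 * k + 4 := by ring
      have e2 : j + 2 * (k + 1) = j + 2 * k + 2 := by ring
      rw [e1, e2]
      linarith
  set u := |q * kI q (j + 2) - kI q j| with hu
  have hupos : 0 < u := abs_pos.2 (sub_ne_zero.2 hne)
  have hb : ∀ k : ℕ, q ^ k * u ≤ (q + 1) * Real.pi := by
    intro k
    have h0 : (0 : ℝ) ≤ q ^ k := by positivity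
    rw [hu, ← abs_of_nonneg h0, ← abs_mul, ← hk]
    refine (abs_sub _ _).trans ?_
    rw [abs_mul, abs_of_nonneg (by linarith : (0 : ℝ) ≤ q)]
    have h1 := kI_bound hq (j + 2 * k + 2)
    have h2 := kI_bound hq (j + 2 * k)
    nlinarith
  obtain ⟨k, hk⟩ := pow_unbounded_of_one_lt ((q + 1) * Real.pi / u) (by linarith : 1 < q)
  rw [div_lt_iff₀ hupos] at hk
  linarith [hb k]

theorem kI_zero_val {q : ℝ} (hq : 3 ≤ q) : (q ^ 2 - 1) * kI q 0 = Real.pi := by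
  have h1 := kI_zero hq
  have h2 := kI_step hq 0
  simp only [zero_add] at h2
  linarith

theorem kI_one {q : ℝ} : kI q 1 = 0 := by
  have h := intervalIntegral.integral_comp_sub_left (a := 0) (b := Real.pi)
    (fun θ => Real.cos ((1 : ℕ) * θ) / kE q θ) Real.pi
  simp only [sub_zero, sub_self] at h
  have h2 : ∫ θ in (0 : ℝ)..Real.pi, Real.cos ((1 : ℕ) * (Real.pi - θ)) / kE q (Real.pi - θ) =
      - kI q 1 := by
    rw [kI, ← intervalIntegral.integral_neg]
    refine intervalIntegral.integral_congr fun θ _ => ?_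
    have : kE q (Real.pi - θ) = kE q θ := by
      unfold kE
      rw [show 2 * (Real.pi - θ) = 2 * Real.pi - 2 * θ by ring, Real.cos_two_pi_sub]
    simp only [this, Nat.cast_one, one_mul, Real.cos_pi_sub]
    ring
  rw [h2] at h
  have : kI q 1 = - kI q 1 := by rw [h]; rfl
  linarith

/-- Weighted integral of sin² -/
theorem kI_mass {q : ℝ} (hq : 3 ≤ q) :
    ∫ θ in (0 : ℝ)..Real.pi, Real.sin θ ^ 2 / kE q θ = Real.pi / (2 * q * (q + 1)) := by
  have hc : ∀ i : ℕ, IntervalIntegrable (fun θ => Real.cos (i * θ) / kE q θ) volume 0 Real.pi :=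
    fun i => (kI_cont hq _ (by fun_prop)).intervalIntegrable _ _
  have h : ∫ θ in (0 : ℝ)..Real.pi, Real.sin θ ^ 2 / kE q θ = (1 / 2) * (kI q 0 - kI q 2) := by
    unfold kI
    rw [← intervalIntegral.integral_sub (hc _) (hc _), ← intervalIntegral.integral_const_mul]
    refine intervalIntegral.integral_congr fun θ _ => ?_
    simp only [Nat.cast_zero, zero_mul, Real.cos_zero, Nat.cast_ofNat]
    rw [Real.sin_sq_eq_half_sub]
    ring
  rw [h]
  have h1 := kI_zero_val hq
  have h2 := kI_step hq 0
  simp only [zero_add] at h2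
  have hq1 : q ^ 2 - 1 ≠ 0 := by nlinarith
  have e : kI q 0 = Real.pi / (q ^ 2 - 1) := by rw [eq_div_iff hq1]; linarith
  have e2 : kI q 2 = Real.pi / (q ^ 2 - 1) / q := by
    rw [eq_div_iff (by linarith)]; linarith
  rw [e, e2]
  have : q - 1 ≠ 0 := by linarith
  have : q + 1 ≠ 0 := by linarith
  have : q ≠ 0 := by linarith
  rw [show q ^ 2 - 1 = (q - 1) * (q + 1) by ring]
  field_simp

theorem gero_trig {d : ℕ} {r : ℝ} (hr : r ^ 2 = 2 * d - 1) (θ : ℝ) (j : ℕ) :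
    r * (geroP d (j + 1)).eval (2 * r * Real.cos θ) * Real.sin θ =
      r ^ (j + 2) * Real.sin ((j + 2 : ℕ) * θ) - r ^ j * Real.sin (j * θ) := by
  have hs : ∀ j : ℕ, Real.sin ((j + 2 : ℕ) * θ) =
      2 * Real.cos θ * Real.sin ((j + 1 : ℕ) * θ) - Real.sin (j * θ) := by
    intro j
    have e1 : ((j + 2 : ℕ) : ℝ) * θ = ((j + 1 : ℕ) : ℝ) * θ + θ := by push_cast; ring
    have e2 : (j : ℝ) * θ = ((j + 1 : ℕ) : ℝ) * θ - θ := by push_cast; ring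
    rw [e1, e2, Real.sin_add, Real.sin_sub]
    ring
  induction j using Nat.strong_induction_on with
  | _ j ih =>
    match j with
    | 0 =>
      have h0 := hs 0
      simp [geroP] at h0 ⊢
      rw [h0]; ring
    | 1 =>
      have h0 := hs 0
      have h1 := hs 1
      simp [geroP] at h0 h1 ⊢
      rw [h1, h0]
      have : r ^ 3 = r * (2 * d - 1) := by rw [← hr]; ring
      rw [this, mul_pow, mul_pow, hr]
      ring
    | j + 2 =>
      have h1 := ih (j + 1) (by omega)
      have h0 := ih j (by omega)
      have a := hs (j + 2)
      have b := hs j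
      simp only [geroP, Polynomial.eval_sub, Polynomial.eval_mul, Polynomial.eval_X,
        Polynomial.eval_C]
      rw [← hr]
      have c : j + 1 + 1 = j + 2 := rfl
      have c2 : j + 2 + 1 = j + 1 + 2 := by ring
      rw [c] at h1
      rw [c2] at a
      rw [a, b]
      rw [b] at h0
      have : r * (2 * r * Real.cos θ * (geroP d (j + 2)).eval (2 * r * Real.cos θ) -
        r ^ 2 * (geroP d (j + 1)).eval (2 * r * Real.cos θ)) * Real.sin θ =
        2 * r * Real.cos θ * (r * (geroP d (j + 2)).eval (2 * r * Real.cos θ) * Real.sin θ) -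
        r ^ 2 * (r * (geroP d (j + 1)).eval (2 * r * Real.cos θ) * Real.sin θ) := by ring
      rw [this, h1, h0]
      ring

theorem gero_int {d : ℕ} {r : ℝ} (hr : r ^ 2 = 2 * d - 1) (hr0 : 0 < r)
    (hq : 3 ≤ r ^ 2) (j : ℕ) :
    ∫ θ in (0 : ℝ)..Real.pi, (geroP d (j + 1)).eval (2 * r * Real.cos θ) *
      (Real.sin θ ^ 2 / kE (r ^ 2) θ) = 0 := by
  set q := r ^ 2 with hqd
  have hc : ∀ i : ℕ, IntervalIntegrable (fun θ => Real.cos (i * θ) / kE q θ) volume 0 Real.pi :=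
    fun i => (kI_cont hq _ (by fun_prop)).intervalIntegrable _ _
  suffices h : r * ∫ θ in (0 : ℝ)..Real.pi, (geroP d (j + 1)).eval (2 * r * Real.cos θ) *
      (Real.sin θ ^ 2 / kE q θ) = 0 by
    rcases mul_eq_zero.1 h with h | h
    · linarith
    · exact h
  rw [← intervalIntegral.integral_const_mul]
  have hss : ∀ (i : ℕ) θ, Real.sin ((i + 1 : ℕ) * θ) * Real.sin θ =
      (Real.cos (i * θ) - Real.cos ((i + 2 : ℕ) * θ)) / 2 := by
    intro i θ
    have e1 : ((i + 2 : ℕ) : ℝ) * θ = ((i + 1 : ℕ) : ℝ) * θ + θ := by push_cast; ring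
    have e2 : (i : ℝ) * θ = ((i + 1 : ℕ) : ℝ) * θ - θ := by push_cast; ring
    rw [e1, e2, Real.cos_add, Real.cos_sub]
    ring
  match j with
  | 0 =>
    have e : ∫ θ in (0 : ℝ)..Real.pi, r * ((geroP d (0 + 1)).eval (2 * r * Real.cos θ) *
        (Real.sin θ ^ 2 / kE q θ)) = r ^ 2 / 2 * (kI q 1 - kI q 3) := by
      unfold kI
      rw [← intervalIntegral.integral_sub (hc _) (hc _), ← intervalIntegral.integral_const_mul]
      refine intervalIntegral.integral_congr fun θ _ => ?_
      have h := gero_trig hr θ 0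
      have h2 := hss 1 θ
      calc _ = (r * (geroP d (0 + 1)).eval (2 * r * Real.cos θ) * Real.sin θ) *
            Real.sin θ / kE q θ := by ring
        _ = r ^ 2 * (Real.sin ((1 + 1 : ℕ) * θ) * Real.sin θ) / kE q θ := by rw [h]; simp; ring
        _ = _ := by rw [h2]; ring
    rw [e]
    have h1 := kI_step hq 1
    rw [kI_one] at h1 ⊢
    have : kI q 3 = 0 := by
      rcases mul_eq_zero.1 h1 with h | h
      · linarith
      · exact h
    rw [this]; ring
  | i + 1 =>
    have e : ∫ θ in (0 : ℝ)..Real.pi, r * ((geroP d (i + 1 + 1)).eval (2 * r * Real.cos θ) *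
        (Real.sin θ ^ 2 / kE q θ)) = r ^ (i + 3) / 2 * (kI q (i + 2) - kI q (i + 4)) -
          r ^ (i + 1) / 2 * (kI q i - kI q (i + 2)) := by
      unfold kI
      rw [← intervalIntegral.integral_sub (hc _) (hc _), ← intervalIntegral.integral_sub (hc _) (hc _),
        ← intervalIntegral.integral_const_mul, ← intervalIntegral.integral_const_mul,
        ← intervalIntegral.integral_sub (((hc _).sub (hc _)).const_mul _)
        (((hc _).sub (hc _)).const_mul _)]
      refine intervalIntegral.integral_congr fun θ _ => ?_
      have h := gero_trig hr θ (i + 1)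
      have h2 := hss (i + 2) θ
      have h3 := hss i θ
      calc _ = (r * (geroP d (i + 1 + 1)).eval (2 * r * Real.cos θ) * Real.sin θ) *
            Real.sin θ / kE q θ := by ring
        _ = (r ^ (i + 3) * (Real.sin ((i + 2 + 1 : ℕ) * θ) * Real.sin θ) -
          r ^ (i + 1) * (Real.sin ((i + 1 : ℕ) * θ) * Real.sin θ)) / kE q θ := by
            rw [h]; ring_nf
        _ = _ := by rw [h2, h3]; ring
    rw [e]
    have h1 := kI_step hq i
    have h2 := kI_step hq (i + 2)
    rw [show i + 2 + 2 = i + 4 by ring] at h2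
    rw [← h1, ← h2, show r ^ (i + 3) = r ^ (i + 1) * q by rw [hqd]; ring]
    ring

end PartB1

section PartB2
set_option linter.unusedSimpArgs false
open MeasureTheory intervalIntegral

theorem km_eq_indicator (d : ℕ) {r : ℝ} (hr0 : 0 < r) (hr : r ^ 2 = 2 * d - 1) (x : ℝ) :
    kmDensity d x = (Set.Icc (-(2 * r)) (2 * r)).indicator (fun x =>
      2 * d * Real.sqrt (4 * r ^ 2 - x ^ 2) / (2 * Real.pi * ((r ^ 2 + 1) ^ 2 - x ^ 2))) x := by
  have h : x ^ 2 ≤ 4 * (2 * (d : ℝ) - 1) ↔ x ∈ Set.Icc (-(2 * r)) (2 * r) := by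
    rw [← hr, Set.mem_Icc, ← abs_le, ← sq_le_sq₀ (abs_nonneg x) (by positivity), sq_abs]
    constructor <;> intro h <;> nlinarith
  unfold kmDensity Set.indicator
  have e : 2 * (d : ℝ) = r ^ 2 + 1 := by linarith
  by_cases hx : x ^ 2 ≤ 4 * (2 * (d : ℝ) - 1)
  · rw [if_pos hx, if_pos (h.1 hx), ← hr, e]
  · rw [if_neg hx, if_neg (fun h' => hx (h.2 h'))]

theorem km_den_pos {r x : ℝ} (hr0 : 0 < r) (hq : 3 ≤ r ^ 2) (hx : x ∈ Set.Icc (-(2 * r)) (2 * r)) :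
    4 ≤ (r ^ 2 + 1) ^ 2 - x ^ 2 := by
  have : x ^ 2 ≤ 4 * r ^ 2 := by nlinarith [hx.1, hx.2]
  nlinarith

theorem km_nonneg (d : ℕ) {r : ℝ} (hr0 : 0 < r) (hr : r ^ 2 = 2 * d - 1) (hq : 3 ≤ r ^ 2) (x : ℝ) :
    0 ≤ kmDensity d x := by
  rw [km_eq_indicator d hr0 hr]
  refine Set.indicator_nonneg (fun x hx => ?_) x
  have := km_den_pos hr0 hq hx
  have := Real.pi_pos
  positivity

theorem km_bound (d : ℕ) {r : ℝ} (hr0 : 0 < r) (hr : r ^ 2 = 2 * d - 1) (hq : 3 ≤ r ^ 2) (x : ℝ) :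
    kmDensity d x ≤ 2 * d * r := by
  rw [km_eq_indicator d hr0 hr]
  refine Set.indicator_le' (g := fun _ => 2 * (d : ℝ) * r) (fun x hx => ?_) (fun x _ => ?_) x
  · have h1 := km_den_pos hr0 hq hx
    have h2 := Real.pi_gt_three
    rw [div_le_iff₀ (by positivity)]
    have h3 : Real.sqrt (4 * r ^ 2 - x ^ 2) ≤ 2 * r := by
      rw [Real.sqrt_le_left (by positivity)]
      nlinarith [sq_nonneg x]
    have h4 : (2 : ℝ) ≤ 2 * Real.pi * ((r ^ 2 + 1) ^ 2 - x ^ 2) := by nlinarith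
    calc 2 * (d : ℝ) * Real.sqrt (4 * r ^ 2 - x ^ 2) ≤ 2 * d * (2 * r) := by gcongr
      _ = 2 * d * r * 2 := by ring
      _ ≤ _ := by gcongr
  · positivity

theorem km_contOn (d : ℕ) {r : ℝ} (hr0 : 0 < r) (hq : 3 ≤ r ^ 2) :
    ContinuousOn (fun x : ℝ => 2 * d * Real.sqrt (4 * r ^ 2 - x ^ 2) /
      (2 * Real.pi * ((r ^ 2 + 1) ^ 2 - x ^ 2))) (Set.Icc (-(2 * r)) (2 * r)) := by
  refine ContinuousOn.div (by fun_prop) (by fun_prop) fun x hx => ?_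
  have := km_den_pos hr0 hq hx
  have := Real.pi_pos
  positivity

theorem km_meas (d : ℕ) : Measurable (kmDensity d) := by
  unfold kmDensity
  refine Measurable.ite ?_ (by fun_prop) measurable_const
  exact measurableSet_le (by fun_prop) (by fun_prop)

theorem km_integral (d : ℕ) {r : ℝ} (hr0 : 0 < r) (hr : r ^ 2 = 2 * d - 1) (hq : 3 ≤ r ^ 2)
    (f : ℝ → ℝ) (hf : Continuous f) :
    ∫ x, kmDensity d x * f x = (2 * r ^ 2 * (r ^ 2 + 1) / Real.pi) *
      ∫ θ in (0 : ℝ)..Real.pi, f (2 * r * Real.cos θ) * (Real.sin θ ^ 2 / kE (r ^ 2) θ) := by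
  set D : ℝ → ℝ := fun x => 2 * d * Real.sqrt (4 * r ^ 2 - x ^ 2) /
      (2 * Real.pi * ((r ^ 2 + 1) ^ 2 - x ^ 2)) with hD
  have h1 : ∫ x, kmDensity d x * f x = ∫ x in (-(2 * r))..(2 * r), D x * f x := by
    rw [intervalIntegral.integral_of_le (by linarith), ← integral_Icc_eq_integral_Ioc,
      ← MeasureTheory.integral_indicator measurableSet_Icc]
    congr 1
    ext x
    rw [km_eq_indicator d hr0 hr, Set.indicator_mul_left]
  have himg : (fun θ => 2 * r * Real.cos θ) '' (Set.uIcc 0 Real.pi) ⊆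
      Set.Icc (-(2 * r)) (2 * r) := by
    rintro _ ⟨θ, _, rfl⟩
    constructor
    · nlinarith [Real.neg_one_le_cos θ]
    · nlinarith [Real.cos_le_one θ]
  have h2 := intervalIntegral.integral_comp_mul_deriv'' (a := 0) (b := Real.pi)
    (f := fun θ => 2 * r * Real.cos θ) (f' := fun θ => 2 * r * (- Real.sin θ))
    (g := fun x => D x * f x) (by fun_prop)
    (fun θ _ => ((Real.hasDerivAt_cos θ).const_mul (2 * r)).hasDerivWithinAt)
    (by fun_prop) (((km_contOn d hr0 hq).mul hf.continuousOn).mono himg)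
  simp only [Real.cos_zero, Real.cos_pi, mul_one, mul_neg_one] at h2
  rw [h1, intervalIntegral.integral_symm, ← h2, ← intervalIntegral.integral_neg,
    ← intervalIntegral.integral_const_mul]
  refine intervalIntegral.integral_congr fun θ hθ => ?_
  rw [Set.uIcc_of_le Real.pi_pos.le] at hθ
  have hs := Real.sin_nonneg_of_mem_Icc hθ
  have hsq : Real.sqrt (4 * r ^ 2 - (2 * r * Real.cos θ) ^ 2) = 2 * r * Real.sin θ := by
    rw [show 4 * r ^ 2 - (2 * r * Real.cos θ) ^ 2 = (2 * r * Real.sin θ) ^ 2 by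
      rw [mul_pow, mul_pow, mul_pow, Real.sin_sq]; ring]
    exact Real.sqrt_sq (by positivity)
  have hE : (r ^ 2 + 1) ^ 2 - (2 * r * Real.cos θ) ^ 2 = kE (r ^ 2) θ := by
    unfold kE; rw [Real.cos_two_mul]; ring
  have hE1 := kE_pos hq θ
  have e : 2 * (d : ℝ) = r ^ 2 + 1 := by linarith
  simp only [Function.comp, hD]
  rw [hsq, hE, e]
  have hE0 : kE (r ^ 2) θ ≠ 0 := by linarith
  have := Real.pi_ne_zero
  field_simp

theorem km_facts (d : ℕ) (hd : 2 ≤ d) :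
    IsProbabilityMeasure (kestenMcKay d) ∧
    kestenMcKay d (Set.Icc (-(2 * d : ℝ)) (2 * d))ᶜ = 0 ∧
    (∃ L : ℝ, 0 < L ∧ ∀ x y : ℝ, x ≤ y →
      (kestenMcKay d (Set.Icc x y)).toReal ≤ L * (y - x)) ∧
    (∀ m : ℕ, ∫ x, (geroP d (m + 1)).eval x ∂(kestenMcKay d) = 0) := by
  have hd' : (2 : ℝ) ≤ d := by exact_mod_cast hd
  set r := Real.sqrt (2 * d - 1) with hrd
  have hr : r ^ 2 = 2 * d - 1 := Real.sq_sqrt (by linarith)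
  have hr0 : 0 < r := Real.sqrt_pos.2 (by linarith)
  have hq : 3 ≤ r ^ 2 := by linarith
  have hnn := km_nonneg d hr0 hr hq
  have hintg : Integrable (kmDensity d) := by
    have : kmDensity d = (Set.Icc (-(2 * r)) (2 * r)).indicator (fun x =>
      2 * d * Real.sqrt (4 * r ^ 2 - x ^ 2) / (2 * Real.pi * ((r ^ 2 + 1) ^ 2 - x ^ 2))) := by
      ext x; exact km_eq_indicator d hr0 hr x
    rw [this, integrable_indicator_iff measurableSet_Icc]
    exact (km_contOn d hr0 hq).integrableOn_compact isCompact_Icc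
  refine ⟨⟨?_⟩, ?_, ⟨2 * d * r, by positivity, ?_⟩, ?_⟩
  · rw [kestenMcKay, withDensity_apply _ MeasurableSet.univ, Measure.restrict_univ,
      ← ofReal_integral_eq_lintegral_ofReal hintg (Filter.Eventually.of_forall hnn)]
    have := km_integral d hr0 hr hq (fun _ => 1) continuous_const
    simp only [mul_one, one_mul] at this
    rw [this, kI_mass hq]
    have : (2 * r ^ 2 * (r ^ 2 + 1) / Real.pi) * (Real.pi / (2 * r ^ 2 * (r ^ 2 + 1))) = 1 := by
      have := Real.pi_ne_zero
      field_simp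
    rw [this]; simp
  · rw [kestenMcKay, withDensity_apply _ measurableSet_Icc.compl]
    rw [setLIntegral_congr_fun (g := fun _ => 0) measurableSet_Icc.compl]
    · simp
    · intro x hx
      simp only
      rw [km_eq_indicator d hr0 hr, Set.indicator_of_notMem, ENNReal.ofReal_zero]
      intro h
      have : 2 * r ≤ 2 * d := by nlinarith
      exact hx ⟨by linarith [h.1], by linarith [h.2]⟩
  · intro x y hxy
    rw [kestenMcKay, withDensity_apply _ measurableSet_Icc]
    have : ∫⁻ a in Set.Icc x y, ENNReal.ofReal (kmDensity d a) ≤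
        ENNReal.ofReal (2 * d * r * (y - x)) := by
      calc _ ≤ ∫⁻ a in Set.Icc x y, ENNReal.ofReal (2 * d * r) :=
            lintegral_mono fun a => ENNReal.ofReal_le_ofReal (km_bound d hr0 hr hq a)
        _ = _ := by
          rw [setLIntegral_const, Real.volume_Icc, ← ENNReal.ofReal_mul (by positivity)]
    exact ENNReal.toReal_le_of_le_ofReal
      (mul_nonneg (by positivity) (by linarith)) this
  · intro m
    rw [kestenMcKay, integral_withDensity_eq_integral_toReal_smul
      ((km_meas d).ennreal_ofReal) (by simp)]
    have : ∀ x, (ENNReal.ofReal (kmDensity d x)).toReal • (geroP d (m + 1)).eval x =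
        kmDensity d x * (geroP d (m + 1)).eval x := by
      intro x
      rw [ENNReal.toReal_ofReal (hnn x), smul_eq_mul]
    simp only [this]
    rw [km_integral d hr0 hr hq (fun x => (geroP d (m + 1)).eval x) (Polynomial.continuous _),
      gero_int hr hr0 hq, mul_zero]

end PartB2

section PartC1
set_option linter.unusedSimpArgs false
set_option linter.unusedVariables false
open MeasureTheory intervalIntegral

/-- Dirichlet-type kernel polynomial -/
noncomputable def kQ (R : ℝ) : ℕ → Polynomial ℝ
  | 0 => 1
  | 1 => 3 - Polynomial.C (4 / R ^ 2) * Polynomial.X ^ 2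
  | k + 2 => (2 - Polynomial.C (4 / R ^ 2) * Polynomial.X ^ 2) * kQ R (k + 1) - kQ R k

theorem kQ_trig {R : ℝ} (hR : 0 < R) (φ : ℝ) (k : ℕ) :
    (kQ R k).eval (R * Real.sin φ) * Real.sin φ = Real.sin ((2 * k + 1 : ℕ) * φ) := by
  have hx : 4 / R ^ 2 * (R * Real.sin φ) ^ 2 = 4 * Real.sin φ ^ 2 := by field_simp
  have hs : ∀ k : ℕ, Real.sin ((2 * (k + 2) + 1 : ℕ) * φ) =
      (2 - 4 * Real.sin φ ^ 2) * Real.sin ((2 * (k + 1) + 1 : ℕ) * φ) -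
        Real.sin ((2 * k + 1 : ℕ) * φ) := by
    intro k
    have e1 : ((2 * (k + 2) + 1 : ℕ) : ℝ) * φ = ((2 * (k + 1) + 1 : ℕ) : ℝ) * φ + 2 * φ := by
      push_cast; ring
    have e2 : ((2 * k + 1 : ℕ) : ℝ) * φ = ((2 * (k + 1) + 1 : ℕ) : ℝ) * φ - 2 * φ := by
      push_cast; ring
    have e3 : 2 - 4 * Real.sin φ ^ 2 = 2 * Real.cos (2 * φ) := by
      rw [Real.cos_two_mul, Real.sin_sq]; ring
    rw [e1, e2, e3, Real.sin_add, Real.sin_sub]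
    ring
  induction k using Nat.strong_induction_on with
  | _ k ih =>
    match k with
    | 0 => simp [kQ]
    | 1 =>
      have : Real.sin ((2 * 1 + 1 : ℕ) * φ) = 3 * Real.sin φ - 4 * Real.sin φ ^ 3 := by
        rw [← Real.sin_three_mul]; norm_num
      rw [this]
      simp only [kQ, Polynomial.eval_sub, Polynomial.eval_mul, Polynomial.eval_C,
        Polynomial.eval_pow, Polynomial.eval_X, hx, Polynomial.eval_ofNat]
      ring
    | k + 2 =>
      rw [hs, ← ih (k + 1) (by omega), ← ih k (by omega)]
      simp only [kQ, Polynomial.eval_sub, Polynomial.eval_mul, Polynomial.eval_C,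
        Polynomial.eval_pow, Polynomial.eval_X, hx, Polynomial.eval_ofNat]
      ring

theorem kQ_arcsin {R : ℝ} (hR : 0 < R) {s : ℝ} (hs : |s| ≤ R) : R * Real.sin (Real.arcsin (s / R)) = s := by
  have := abs_le.1 hs
  rw [Real.sin_arcsin (by rw [le_div_iff₀ hR]; linarith) (by rw [div_le_iff₀ hR]; linarith)]
  field_simp

theorem kQ_upper {R : ℝ} (hR : 0 < R) (k : ℕ) {s : ℝ} (hs : |s| ≤ R) :
    (kQ R k).eval s ^ 2 * s ^ 2 ≤ R ^ 2 := by
  have h := kQ_trig hR (Real.arcsin (s / R)) k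
  have e := kQ_arcsin hR hs
  rw [e] at h
  set φ := Real.arcsin (s / R)
  have h2 := Real.sin_sq_le_one ((2 * k + 1 : ℕ) * φ)
  rw [← h] at h2
  calc (kQ R k).eval s ^ 2 * s ^ 2 = ((kQ R k).eval s * Real.sin φ) ^ 2 * R ^ 2 := by
        have e' : s ^ 2 = (R * Real.sin φ) ^ 2 := by rw [e]
        rw [e']; ring
    _ ≤ 1 * R ^ 2 := by gcongr
    _ = R ^ 2 := one_mul _

theorem kQ_lower {R : ℝ} (hR : 0 < R) (k : ℕ) {s : ℝ} (hs0 : 0 < s)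
    (hs : s ≤ R / (2 * k + 1 : ℕ)) :
    ((2 * k + 1 : ℕ) : ℝ) ^ 2 / 4 ≤ (kQ R k).eval s ^ 2 := by
  set m : ℝ := ((2 * k + 1 : ℕ) : ℝ) with hm
  have hm1 : 1 ≤ m := by rw [hm]; exact_mod_cast Nat.le_add_left 1 (2 * k)
  have hsR : s ≤ R := hs.trans (div_le_self hR.le hm1)
  have habs : |s| ≤ R := by rwa [abs_of_pos hs0]
  have h := kQ_trig hR (Real.arcsin (s / R)) k
  have e := kQ_arcsin hR habs
  rw [e, ← hm] at h
  set φ := Real.arcsin (s / R) with hφ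
  have hφ0 : 0 < φ := Real.arcsin_pos.2 (by positivity)
  have hφ2 : φ ≤ Real.pi / 2 := Real.arcsin_le_pi_div_two _
  have hsin : Real.sin φ = s / R := by rw [eq_div_iff hR.ne']; linarith
  have hj := Real.mul_le_sin hφ0.le hφ2
  have hpi := Real.pi_pos
  have hpi4 := Real.pi_le_four
  have hmφ : m * φ ≤ Real.pi / 2 := by
    have h1 : s * m ≤ R := by rwa [le_div_iff₀ (by linarith)] at hs
    have h2 : 2 / Real.pi * φ * m ≤ 1 := by
      calc 2 / Real.pi * φ * m ≤ Real.sin φ * m := by gcongr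
        _ = s * m / R := by rw [hsin]; ring
        _ ≤ 1 := by rw [div_le_one hR]; exact h1
    have h3 : 2 / Real.pi * φ * m = (m * φ) / (Real.pi / 2) := by field_simp
    rw [h3, div_le_one (by positivity)] at h2
    exact h2
  have hj2 := Real.mul_le_sin (by positivity : 0 ≤ m * φ) hmφ
  rw [← h] at hj2
  have hsp : 0 < Real.sin φ := by rw [hsin]; positivity
  have h4 : Real.sin φ ≤ φ := Real.sin_le hφ0.le
  have h5 : (m / 2) * Real.sin φ ≤ (kQ R k).eval s * Real.sin φ := by
    refine le_trans ?_ hj2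
    calc m / 2 * Real.sin φ ≤ m / 2 * φ := by gcongr
      _ = (1 / 2) * (m * φ) := by ring
      _ ≤ 2 / Real.pi * (m * φ) := by
        gcongr ?_ * _
        rw [div_le_div_iff₀ (by norm_num) hpi]; linarith
  have h6 : m / 2 ≤ (kQ R k).eval s := le_of_mul_le_mul_right h5 hsp
  calc m ^ 2 / 4 = (m / 2) ^ 2 := by ring
    _ ≤ _ := by gcongr

/-- total mass -/
theorem kQ_mass {R : ℝ} (hR : 0 < R) (k : ℕ) :
    R * (2 * k + 1 : ℕ) / 4 ≤ ∫ s in (-R)..R, (kQ R k).eval s ^ 2 := by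
  set m : ℝ := ((2 * k + 1 : ℕ) : ℝ) with hm
  have hm1 : 1 ≤ m := by rw [hm]; exact_mod_cast Nat.le_add_left 1 (2 * k)
  have hc : Continuous fun s => (kQ R k).eval s ^ 2 := (Polynomial.continuous _).pow 2
  have h1 : ∫ s in (0 : ℝ)..(R / m), (kQ R k).eval s ^ 2 ≤ ∫ s in (-R)..R, (kQ R k).eval s ^ 2 := by
    refine intervalIntegral.integral_mono_interval (by linarith) (by positivity)
      (div_le_self hR.le hm1) (Filter.Eventually.of_forall fun s => by positivity)
      (hc.intervalIntegrable _ _)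
  refine le_trans ?_ h1
  have h2 : ∫ s in (0 : ℝ)..(R / m), m ^ 2 / 4 ≤ ∫ s in (0 : ℝ)..(R / m), (kQ R k).eval s ^ 2 := by
    refine intervalIntegral.integral_mono_on_of_le_Ioo (by positivity) (by simp)
      (hc.intervalIntegrable _ _) fun s hs => ?_
    exact kQ_lower hR k hs.1 hs.2.le
  refine le_trans (le_of_eq ?_) h2
  rw [intervalIntegral.integral_const, sub_zero, smul_eq_mul]
  field_simp

theorem kQ_even {R : ℝ} (k : ℕ) (s : ℝ) : (kQ R k).eval (-s) = (kQ R k).eval s := by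
  induction k using Nat.strong_induction_on with
  | _ k ih =>
    match k with
    | 0 => simp [kQ]
    | 1 => simp [kQ]
    | k + 2 =>
      simp [kQ, ih (k + 1) (by omega), ih k (by omega)]

theorem kQ_tail {R h : ℝ} (hR : 0 < R) (hh : 0 < h) (hhR : h ≤ R) (k : ℕ) :
    (∫ s in (-R)..(-h), (kQ R k).eval s ^ 2) + (∫ s in h..R, (kQ R k).eval s ^ 2) ≤
      2 * R ^ 2 / h := by
  have hc : Continuous fun s => (kQ R k).eval s ^ 2 := (Polynomial.continuous _).pow 2
  have h1 : ∫ s in (-R)..(-h), (kQ R k).eval s ^ 2 = ∫ s in h..R, (kQ R k).eval s ^ 2 := by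
    rw [← intervalIntegral.integral_comp_neg]
    simp only [kQ_even]
  have hd : ∀ s ∈ Set.uIcc h R, HasDerivAt (fun s => - (R ^ 2 / s)) (R ^ 2 / s ^ 2) s := by
    intro s hs
    rw [Set.uIcc_of_le hhR] at hs
    have hs0 : s ≠ 0 := by linarith [hs.1]
    have := ((hasDerivAt_inv hs0).const_mul (R ^ 2)).neg
    have e2 : (fun s : ℝ => -(R ^ 2 / s)) = -(fun s : ℝ => R ^ 2 * s⁻¹) := by
      funext s; simp [div_eq_mul_inv]
    rw [e2]
    refine this.congr_deriv ?_
    rw [div_eq_mul_inv]; ring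
  have hcont : ContinuousOn (fun s : ℝ => R ^ 2 / s ^ 2) (Set.uIcc h R) := by
    refine ContinuousOn.div (by fun_prop) (by fun_prop) fun s hs => ?_
    rw [Set.uIcc_of_le hhR] at hs
    have : 0 < s := by linarith [hs.1]
    positivity
  have h2 : ∫ s in h..R, (kQ R k).eval s ^ 2 ≤ ∫ s in h..R, R ^ 2 / s ^ 2 := by
    refine intervalIntegral.integral_mono_on hhR (hc.intervalIntegrable _ _)
      hcont.intervalIntegrable fun s hs => ?_
    have hs0 : 0 < s := by linarith [hs.1]
    rw [le_div_iff₀ (by positivity)]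
    exact kQ_upper hR k (by rw [abs_of_pos hs0]; exact hs.2)
  rw [intervalIntegral.integral_eq_sub_of_hasDerivAt hd hcont.intervalIntegrable] at h2
  have h3 : 0 ≤ R ^ 2 / R := by positivity
  rw [h1]
  have : 2 * R ^ 2 / h = 2 * (R ^ 2 / h) := by ring
  rw [this]
  linarith

/-- weighted coefficient bound -/
def GB (ρ : ℝ) (D : ℕ) (c : ℝ) (P : Polynomial ℝ) : Prop :=
  ∀ (φ : Polynomial ℝ →ₗ[ℝ] ℝ) (K : ℝ), (∀ j ≤ D, |φ (Polynomial.X ^ j)| ≤ K * ρ ^ j) →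
    |φ P| ≤ c * K

theorem GB.mul {ρ : ℝ} {D₁ D₂ : ℕ} {c₁ c₂ : ℝ} {P Q : Polynomial ℝ}
    (hP : GB ρ D₁ c₁ P) (hQ : GB ρ D₂ c₂ Q) : GB ρ (D₁ + D₂) (c₁ * c₂) (P * Q) := by
  intro φ K hφ
  have h1 : ∀ j ≤ D₂, |φ (P * Polynomial.X ^ j)| ≤ (c₁ * K) * ρ ^ j := by
    intro j hj
    have := hP (φ.comp (LinearMap.mulRight ℝ (Polynomial.X ^ j))) (K * ρ ^ j) (by
      intro i hi
      have := hφ (i + j) (by omega)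
      simp only [LinearMap.comp_apply, LinearMap.mulRight_apply, ← pow_add]
      refine this.trans (le_of_eq ?_)
      ring)
    simp only [LinearMap.comp_apply, LinearMap.mulRight_apply] at this
    refine this.trans (le_of_eq (by ring))
  have := hQ (φ.comp (LinearMap.mulLeft ℝ P)) (c₁ * K) (by
    intro j hj
    simpa using h1 j hj)
  simp only [LinearMap.comp_apply, LinearMap.mulLeft_apply] at this
  exact this.trans (le_of_eq (by ring))

theorem GB.sub {ρ : ℝ} {D : ℕ} {c₁ c₂ : ℝ} {P Q : Polynomial ℝ}
    (hP : GB ρ D c₁ P) (hQ : GB ρ D c₂ Q) : GB ρ D (c₁ + c₂) (P - Q) := by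
  intro φ K hφ
  rw [map_sub, add_mul]
  exact (abs_sub _ _).trans (add_le_add (hP φ K hφ) (hQ φ K hφ))

theorem GB.mono {ρ : ℝ} {D D' : ℕ} {c c' : ℝ} {P : Polynomial ℝ}
    (hP : GB ρ D c P) (hD : D ≤ D') (hc : c ≤ c') : GB ρ D' c' P := by
  intro φ K hφ
  have hK : 0 ≤ K := by
    have := (abs_nonneg _).trans (hφ 0 (Nat.zero_le _))
    simpa using this
  exact (hP φ K fun j hj => hφ j (hj.trans hD)).trans (by gcongr)

theorem GB.const {ρ : ℝ} (a : ℝ) : GB ρ 0 |a| (Polynomial.C a) := by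
  intro φ K hφ
  have := hφ 0 le_rfl
  simp only [pow_zero, mul_one] at this
  have e : Polynomial.C a = a • (1 : Polynomial ℝ) := by
    rw [Polynomial.smul_eq_C_mul, mul_one]
  rw [e, map_smul, smul_eq_mul, abs_mul]
  gcongr

theorem GB.X2 {ρ : ℝ} : GB ρ 2 (ρ ^ 2) (Polynomial.X ^ 2) := by
  intro φ K hφ
  have := hφ 2 le_rfl
  linarith

theorem kQ_GB {R ρ : ℝ} (hR : 0 < R) (hρ : ρ ^ 2 ≤ 4 * R ^ 2) (k : ℕ) :
    GB ρ (2 * k) (19 ^ k) (kQ R k) := by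
  have hX : GB ρ 2 16 (Polynomial.C (4 / R ^ 2) * Polynomial.X ^ 2) := by
    have := (GB.const (ρ := ρ) (4 / R ^ 2)).mul (GB.X2 (ρ := ρ))
    refine this.mono (by simp) ?_
    rw [abs_of_pos (by positivity), div_mul_eq_mul_div, div_le_iff₀ (by positivity)]
    linarith
  have h3 : GB ρ 2 3 3 := by
    have := (GB.const (ρ := ρ) 3).mono (D' := 2) (c' := 3) (by simp) (by norm_num)
    rwa [map_ofNat Polynomial.C 3] at this
  have h2 : GB ρ 2 2 2 := by
    have := (GB.const (ρ := ρ) 2).mono (D' := 2) (c' := 2) (by simp) (by norm_num)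
    rwa [map_ofNat Polynomial.C 2] at this
  induction k using Nat.strong_induction_on with
  | _ k ih =>
    match k with
    | 0 =>
      have := (GB.const (ρ := ρ) 1).mono (D' := 0) (c' := 1) (by simp) (by norm_num)
      simpa [kQ] using this
    | 1 =>
      rw [kQ]
      exact (h3.sub hX).mono (by simp) (by norm_num)
    | k + 2 =>
      rw [kQ]
      have i1 := (h2.sub hX).mul (ih (k + 1) (by omega))
      have i0 := ih k (by omega)
      refine ((i1.mono (D' := 2 * (k + 2)) (by omega) le_rfl).sub
        (i0.mono (D' := 2 * (k + 2)) (by omega) le_rfl)).mono le_rfl ?_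
      have : (0 : ℝ) < 19 ^ k := by positivity
      rw [pow_succ, pow_succ, pow_succ]
      nlinarith

end PartC1

section PartC2
set_option linter.unusedSimpArgs false
set_option linter.unusedVariables false
open MeasureTheory

theorem gero_shift (d : ℕ) (Λ : Polynomial ℝ →ₗ[ℝ] ℝ) (a δ : ℝ) (M : ℕ) (hδ : 0 ≤ δ)
    (hd : 1 ≤ d)
    (h0 : Λ 1 = 0) (h1 : ∀ m, m + 1 ≤ M → |Λ (geroP d (m + 1))| ≤ δ) :
    ∀ j m, j + m ≤ M →
      |Λ ((Polynomial.X - Polynomial.C a) ^ j * geroP d m)| ≤ (2 * d + 1 + |a|) ^ j * δ := by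
  have hd' : (1 : ℝ) ≤ d := by exact_mod_cast hd
  have hCm : ∀ (c : ℝ) (P : Polynomial ℝ), Λ (Polynomial.C c * P) = c * Λ P := by
    intro c P
    rw [← Polynomial.smul_eq_C_mul, map_smul, smul_eq_mul]
  intro j
  induction j with
  | zero =>
    intro m hm
    cases m with
    | zero => simp [geroP, h0, hδ]
    | succ m => simpa using h1 m (by omega)
  | succ j ih =>
    intro m hm
    set q := (Polynomial.X - Polynomial.C a) ^ j with hq
    set t := (2 * (d : ℝ) + 1 + |a|) ^ j * δ with ht
    have ht0 : 0 ≤ t := by positivity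
    have hfin : (2 * (d : ℝ) + 1 + |a|) ^ (j + 1) * δ = (2 * d + 1 + |a|) * t := by
      rw [ht]; ring
    rw [hfin]
    have key : ∀ (x y z c : ℝ), |x| ≤ t → |y| ≤ t → |z| ≤ t → 0 ≤ c → c ≤ 2 * d →
        |x + c * y - a * z| ≤ (2 * d + 1 + |a|) * t := by
      intro x y z c hx hy hz hc0 hc
      calc |x + c * y - a * z| ≤ |x + c * y| + |a * z| := abs_sub _ _
        _ ≤ |x| + |c * y| + |a * z| := by gcongr; exact abs_add_le _ _
        _ = |x| + c * |y| + |a| * |z| := by rw [abs_mul, abs_mul, abs_of_nonneg hc0]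
        _ ≤ t + (2 * d) * t + |a| * t := by gcongr
        _ = _ := by ring
    match m, hm with
    | 0, hm =>
      have e : (Polynomial.X - Polynomial.C a) ^ (j + 1) * geroP d 0 =
          q * geroP d 1 - Polynomial.C a * (q * geroP d 0) := by
        rw [pow_succ, ← hq]; simp only [geroP]; ring
      rw [e, map_sub, hCm]
      have := key _ 0 _ 0 (ih 1 (by omega)) (by simpa using ht0) (ih 0 (by omega)) le_rfl
        (by positivity)
      simpa using this
    | 1, hm =>
      have e : (Polynomial.X - Polynomial.C a) ^ (j + 1) * geroP d 1 =
          q * geroP d 2 + Polynomial.C (2 * (d : ℝ)) * (q * geroP d 0)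
            - Polynomial.C a * (q * geroP d 1) := by
        rw [pow_succ, ← hq]; simp only [geroP]; ring
      rw [e, map_sub, map_add, hCm, hCm]
      exact key _ _ _ _ (ih 2 (by omega)) (ih 0 (by omega)) (ih 1 (by omega)) (by positivity) le_rfl
    | m + 2, hm =>
      have e : (Polynomial.X - Polynomial.C a) ^ (j + 1) * geroP d (m + 2) =
          q * geroP d (m + 3) + Polynomial.C (2 * (d : ℝ) - 1) * (q * geroP d (m + 1))
            - Polynomial.C a * (q * geroP d (m + 2)) := by
        rw [pow_succ, ← hq]; simp only [geroP]; ring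
      rw [e, map_sub, map_add, hCm, hCm]
      exact key _ _ _ _ (ih (m + 3) (by omega)) (ih (m + 1) (by omega)) (ih (m + 2) (by omega))
        (by linarith) (by linarith)

/-- cdf -/
noncomputable def cdfF (ν : Measure ℝ) (x : ℝ) : ℝ := (ν (Set.Iic x)).toReal

theorem cdfF_mono (ν : Measure ℝ) [IsProbabilityMeasure ν] : Monotone (cdfF ν) := by
  intro x y h
  exact ENNReal.toReal_mono (measure_ne_top _ _) (measure_mono (Set.Iic_subset_Iic.2 h))

theorem cdfF_nonneg (ν : Measure ℝ) (x : ℝ) : 0 ≤ cdfF ν x := ENNReal.toReal_nonneg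

theorem cdfF_le_one (ν : Measure ℝ) [IsProbabilityMeasure ν] (x : ℝ) : cdfF ν x ≤ 1 := by
  have := prob_le_one (μ := ν) (s := Set.Iic x)
  exact ENNReal.toReal_le_of_le_ofReal zero_le_one (by simpa using this)

theorem cdfF_ii (ν : Measure ℝ) [IsProbabilityMeasure ν] (a u v : ℝ) (p : Polynomial ℝ) :
    IntervalIntegrable (fun s => p.eval s * cdfF ν (a + s)) volume u v := by
  have h : IntervalIntegrable (fun s => cdfF ν (a + s)) volume u v :=
    Monotone.intervalIntegrable fun x y hxy => cdfF_mono ν (by linarith)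
  exact h.continuousOn_mul p.continuous.continuousOn

theorem poly_int_supp {ν : Measure ℝ} [IsProbabilityMeasure ν] {B : ℝ}
    (hν : ν (Set.Icc (-B) B)ᶜ = 0) {f : ℝ → ℝ} (hf : Continuous f) : Integrable f ν := by
  obtain ⟨C, hC⟩ := isCompact_Icc.exists_bound_of_continuousOn (s := Set.Icc (-B) B) hf.continuousOn
  refine Integrable.of_bound hf.aestronglyMeasurable C ?_
  have : ∀ᵐ x ∂ν, x ∈ Set.Icc (-B) B := by
    rw [ae_iff]; exact hν
  filter_upwards [this] with x hx using hC x hx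

theorem cdf_fubini {ν : Measure ℝ} [IsProbabilityMeasure ν] {B R a : ℝ}
    (hν : ν (Set.Icc (-B) B)ᶜ = 0) (hR : B + |a| < R) (j : ℕ) :
    ∫ s in (-R)..R, s ^ j * cdfF ν (a + s) =
      ∫ y, (R ^ (j + 1) - (y - a) ^ (j + 1)) / (j + 1) ∂ν := by
  have hae : ∀ᵐ x ∂ν, x ∈ Set.Icc (-B) B := by rw [ae_iff]; exact hν
  have hB : 0 ≤ B := by
    by_contra hB
    have he : Set.Icc (-B) B = ∅ := Set.Icc_eq_empty (by linarith)
    rw [he] at hν; simp at hν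
  have hR0 : 0 ≤ R := by have := abs_nonneg a; linarith
  let F : ℝ → ℝ → ℝ := fun s y => s ^ j * Set.indicator {z : ℝ × ℝ | z.2 ≤ a + z.1} 1 (s, y)
  have hms : MeasurableSet {z : ℝ × ℝ | z.2 ≤ a + z.1} :=
    measurableSet_le measurable_snd (by fun_prop)
  have hFm : Measurable (Function.uncurry F) := by
    have : Function.uncurry F = fun z : ℝ × ℝ => z.1 ^ j * Set.indicator {z : ℝ × ℝ | z.2 ≤ a + z.1} 1 z := by
      funext z; rfl
    rw [this]
    exact (by fun_prop : Measurable fun z : ℝ × ℝ => z.1 ^ j).mul (measurable_one.indicator hms)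
  have hFi : Integrable (Function.uncurry F) ((volume.restrict (Set.Ioc (-R) R)).prod ν) := by
    refine Integrable.of_bound hFm.aestronglyMeasurable (R ^ j) ?_
    have h1 : ∀ᵐ s ∂(volume.restrict (Set.Ioc (-R) R)), s ∈ Set.Ioc (-R) R :=
      ae_restrict_mem measurableSet_Ioc
    have h2 : ∀ᵐ z ∂((volume.restrict (Set.Ioc (-R) R)).prod ν), z.1 ∈ Set.Ioc (-R) R :=
      Measure.quasiMeasurePreserving_fst.ae h1
    filter_upwards [h2] with z hz
    have h3 : |z.1| ≤ R := abs_le.2 ⟨hz.1.le, hz.2⟩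
    have h4 : ‖Set.indicator {z : ℝ × ℝ | z.2 ≤ a + z.1} (1 : ℝ × ℝ → ℝ) z‖ ≤ 1 := by
      refine (norm_indicator_le_norm_self _ _).trans (by simp)
    change ‖z.1 ^ j * Set.indicator {z : ℝ × ℝ | z.2 ≤ a + z.1} 1 z‖ ≤ R ^ j
    rw [norm_mul, norm_pow, Real.norm_eq_abs]
    calc |z.1| ^ j * _ ≤ R ^ j * 1 := by gcongr
      _ = _ := mul_one _
  have hin : ∀ s, ∫ y, F s y ∂ν = s ^ j * cdfF ν (a + s) := by
    intro s
    simp only [F]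
    rw [integral_const_mul]
    congr 1
    have : (fun y => Set.indicator {z : ℝ × ℝ | z.2 ≤ a + z.1} (1 : ℝ × ℝ → ℝ) (s, y)) =
        Set.indicator (Set.Iic (a + s)) 1 := by
      funext y; simp [Set.indicator]
    rw [this, integral_indicator_one measurableSet_Iic]
    rfl
  rw [intervalIntegral.integral_of_le (by linarith)]
  simp only [← hin]
  rw [integral_integral_swap hFi]
  refine integral_congr_ae ?_
  filter_upwards [hae] with y hy
  have h1 : -R < y - a := by have := le_abs_self a; linarith [hy.1]
  have h2 : y - a ≤ R := by have := neg_abs_le a; linarith [hy.2]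
  have e1 : (fun s => F s y) = Set.indicator (Set.Ici (y - a)) (fun s => s ^ j) := by
    funext s
    simp only [F, Set.indicator, Set.mem_ofPred_eq, Set.mem_Ici, Pi.one_apply]
    by_cases h : y ≤ a + s
    · rw [if_pos h, if_pos (by linarith), mul_one]
    · rw [if_neg h, if_neg (by intro h'; exact h (by linarith)), mul_zero]
  rw [e1, setIntegral_indicator measurableSet_Ici]
  have e2 : Set.Ioc (-R) R ∩ Set.Ici (y - a) = Set.Icc (y - a) R := by
    ext s; simp only [Set.mem_inter_iff, Set.mem_Ioc, Set.mem_Ici, Set.mem_Icc]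
    constructor
    · rintro ⟨⟨_, h⟩, h'⟩; exact ⟨h', h⟩
    · rintro ⟨h', h⟩; exact ⟨⟨by linarith, h⟩, h'⟩
  rw [e2, integral_Icc_eq_integral_Ioc, ← intervalIntegral.integral_of_le h2, integral_pow]

/-- the difference of cdfs tested against the square kernel -/
theorem kernel_bound (d : ℕ) (hd : 2 ≤ d) {ν μ : Measure ℝ} [IsProbabilityMeasure ν]
    [IsProbabilityMeasure μ] (hν : ν (Set.Icc (-(2 * d : ℝ)) (2 * d))ᶜ = 0)
    (hμ : μ (Set.Icc (-(2 * d : ℝ)) (2 * d))ᶜ = 0) {δ : ℝ} (hδ : 0 ≤ δ) (k : ℕ)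
    (h : ∀ m, m + 1 ≤ 4 * k + 1 →
      |(∫ x, (geroP d (m + 1)).eval x ∂ν) - ∫ x, (geroP d (m + 1)).eval x ∂μ| ≤ δ)
    {a : ℝ} (ha : |a| ≤ 2 * d + 1) :
    |∫ s in (-(4 * d + 2 : ℝ))..(4 * d + 2), (kQ (4 * d + 2) k).eval s ^ 2 *
        (cdfF ν (a + s) - cdfF μ (a + s))| ≤ 361 ^ k * ((4 * d + 2) * δ) := by
  set R : ℝ := 4 * d + 2 with hRdef
  have hd' : (2 : ℝ) ≤ d := by exact_mod_cast hd
  have hR : 0 < R := by positivity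
  have hRa : 2 * (d : ℝ) + |a| < R := by rw [hRdef]; linarith
  have hi : ∀ (τ : Measure ℝ) [IsProbabilityMeasure τ],
      τ (Set.Icc (-(2 * d : ℝ)) (2 * d))ᶜ = 0 → ∀ p : Polynomial ℝ,
      Integrable (fun x => p.eval x) τ := fun τ _ h p => poly_int_supp h p.continuous
  let Λ : Polynomial ℝ →ₗ[ℝ] ℝ :=
    { toFun := fun p => (∫ x, p.eval x ∂ν) - ∫ x, p.eval x ∂μ
      map_add' := by
        intro p q
        simp only [Polynomial.eval_add]
        rw [integral_add (hi ν hν p) (hi ν hν q), integral_add (hi μ hμ p) (hi μ hμ q)]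
        ring
      map_smul' := by
        intro c p
        simp only [Polynomial.eval_smul, smul_eq_mul, RingHom.id_apply]
        rw [integral_const_mul, integral_const_mul]
        ring }
  have hΛ : ∀ p, Λ p = (∫ x, p.eval x ∂ν) - ∫ x, p.eval x ∂μ := fun p => rfl
  have hΛ1 : Λ 1 = 0 := by simp [hΛ]
  have hsh := gero_shift d Λ a δ (4 * k + 1) hδ (by omega) hΛ1 (fun m hm => h m hm)
  have hii : ∀ p : Polynomial ℝ, IntervalIntegrable
      (fun s => p.eval s * (cdfF ν (a + s) - cdfF μ (a + s))) volume (-R) R := by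
    intro p
    have := (cdfF_ii ν a (-R) R p).sub (cdfF_ii μ a (-R) R p)
    refine this.congr ?_
    exact fun s _ => by simp only [mul_sub]
  let φ : Polynomial ℝ →ₗ[ℝ] ℝ :=
    { toFun := fun p => ∫ s in (-R)..R, p.eval s * (cdfF ν (a + s) - cdfF μ (a + s))
      map_add' := by
        intro p q
        rw [← intervalIntegral.integral_add (hii p) (hii q)]
        simp only [Polynomial.eval_add, add_mul]
      map_smul' := by
        intro c p
        simp only [Polynomial.eval_smul, smul_eq_mul, RingHom.id_apply]
        rw [← intervalIntegral.integral_const_mul]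
        simp only [mul_assoc] }
  have hφ : ∀ p, φ p = ∫ s in (-R)..R, p.eval s * (cdfF ν (a + s) - cdfF μ (a + s)) :=
    fun p => rfl
  have hφX : ∀ j : ℕ, φ (Polynomial.X ^ j) =
      -(Λ ((Polynomial.X - Polynomial.C a) ^ (j + 1)) / (j + 1)) := by
    intro j
    have e1 : φ (Polynomial.X ^ j) = (∫ s in (-R)..R, s ^ j * cdfF ν (a + s)) -
        ∫ s in (-R)..R, s ^ j * cdfF μ (a + s) := by
      have := intervalIntegral.integral_sub (cdfF_ii ν a (-R) R (Polynomial.X ^ j))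
        (cdfF_ii μ a (-R) R (Polynomial.X ^ j))
      simp only [Polynomial.eval_pow, Polynomial.eval_X] at this
      rw [← this, hφ]
      simp only [Polynomial.eval_pow, Polynomial.eval_X, mul_sub]
    have e2 : ∀ (τ : Measure ℝ) [IsProbabilityMeasure τ],
        τ (Set.Icc (-(2 * d : ℝ)) (2 * d))ᶜ = 0 →
        ∫ y, (R ^ (j + 1) - (y - a) ^ (j + 1)) / (j + 1) ∂τ =
        (R ^ (j + 1) - ∫ y, ((Polynomial.X - Polynomial.C a) ^ (j + 1)).eval y ∂τ) / (j + 1) := by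
      intro τ _ hτ
      rw [integral_div]
      congr 1
      have := hi τ hτ ((Polynomial.X - Polynomial.C a) ^ (j + 1))
      simp only [Polynomial.eval_pow, Polynomial.eval_sub, Polynomial.eval_X,
        Polynomial.eval_C] at this ⊢
      rw [integral_sub (integrable_const _) this]
      simp
    rw [e1, cdf_fubini hν hRa, cdf_fubini hμ hRa, e2 ν hν, e2 μ hμ, hΛ]
    ring
  have hb : ∀ j ≤ 2 * k + 2 * k, |φ (Polynomial.X ^ j)| ≤ (R * δ) * R ^ j := by
    intro j hj
    have h1 := hsh (j + 1) 0 (by omega)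
    simp only [geroP, mul_one] at h1
    rw [hφX, abs_neg, abs_div]
    have h2 : (1 : ℝ) ≤ |(j : ℝ) + 1| := by
      rw [abs_of_pos (by positivity)]; have : (0 : ℝ) ≤ j := by positivity
      linarith
    refine (div_le_self (abs_nonneg _) h2).trans (h1.trans ?_)
    calc (2 * (d : ℝ) + 1 + |a|) ^ (j + 1) * δ ≤ R ^ (j + 1) * δ := by
          gcongr; rw [hRdef]; linarith
      _ = _ := by ring
  have hG := kQ_GB (R := R) (ρ := R) hR (by nlinarith [sq_nonneg R]) k
  have := (hG.mul hG) φ _ hb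
  rw [hφ] at this
  have e19 : (19 : ℝ) ^ k * 19 ^ k = 361 ^ k := by rw [← mul_pow]; norm_num
  rw [e19] at this
  simpa only [Polynomial.eval_mul, Polynomial.eval_pow, ← pow_two] using this

end PartC2

section PartC3
set_option linter.unusedSimpArgs false
set_option linter.unusedVariables false
open MeasureTheory

theorem cdfF_sub (ν : Measure ℝ) [IsProbabilityMeasure ν] {x y : ℝ} (h : x ≤ y) :
    cdfF ν y - cdfF ν x = ν.real (Set.Ioc x y) := by
  have := measureReal_sdiff (μ := ν) (Set.Iic_subset_Iic.2 h) measurableSet_Iic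
  have e : Set.Iic y \ Set.Iic x = Set.Ioc x y := by
    ext z; simp [and_comm]
  rw [e] at this
  exact this.symm

theorem smooth_one {J g : ℝ → ℝ} {R h w D ε T Z : ℝ} (hJc : Continuous J) (hJ : ∀ s, 0 ≤ J s)
    (hh : 0 < h) (hhR : h ≤ R)
    (hg : ∀ u v, IntervalIntegrable (fun s => J s * g s) volume u v)
    (hgw : ∀ s ∈ Set.Icc (-h) h, w ≤ g s) (hgD : ∀ s, -D ≤ g s)
    (hT : T = (∫ s in (-R)..(-h), J s) + ∫ s in h..R, J s)
    (hZ : Z = ∫ s in (-R)..R, J s)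
    (hε : ∫ s in (-R)..R, J s * g s ≤ ε) : w * (Z - T) ≤ ε + D * T := by
  have hJi : ∀ u v, IntervalIntegrable J volume u v := fun u v => hJc.intervalIntegrable u v
  have s1 : (∫ s in (-R)..(-h), J s * g s) + (∫ s in (-h)..h, J s * g s) +
      (∫ s in h..R, J s * g s) = ∫ s in (-R)..R, J s * g s := by
    rw [intervalIntegral.integral_add_adjacent_intervals (hg _ _) (hg _ _),
      intervalIntegral.integral_add_adjacent_intervals (hg _ _) (hg _ _)]
  have s2 : (∫ s in (-R)..(-h), J s) + (∫ s in (-h)..h, J s) +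
      (∫ s in h..R, J s) = ∫ s in (-R)..R, J s := by
    rw [intervalIntegral.integral_add_adjacent_intervals (hJi _ _) (hJi _ _),
      intervalIntegral.integral_add_adjacent_intervals (hJi _ _) (hJi _ _)]
  have a1 : ∀ u v, u ≤ v → (∫ s in u..v, J s) * (-D) ≤ ∫ s in u..v, J s * g s := by
    intro u v huv
    rw [← intervalIntegral.integral_mul_const]
    refine intervalIntegral.integral_mono_on huv ((hJi u v).mul_const _) (hg u v) fun s _ => ?_
    exact mul_le_mul_of_nonneg_left (hgD s) (hJ s)
  have a2 : (∫ s in (-h)..h, J s) * w ≤ ∫ s in (-h)..h, J s * g s := by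
    rw [← intervalIntegral.integral_mul_const]
    refine intervalIntegral.integral_mono_on (by linarith) ((hJi _ _).mul_const _) (hg _ _)
      fun s hs => ?_
    exact mul_le_mul_of_nonneg_left (hgw s hs) (hJ s)
  have b1 := a1 (-R) (-h) (by linarith)
  have b2 := a1 h R hhR
  have e : Z - T = ∫ s in (-h)..h, J s := by rw [hZ, hT, ← s2]; ring
  rw [e, hT]
  linarith

set_option maxHeartbeats 1000000 in
theorem smooth_cdf (d : ℕ) (hd : 2 ≤ d) {ν μ : Measure ℝ} [IsProbabilityMeasure ν]
    [IsProbabilityMeasure μ] (hν : ν (Set.Icc (-(2 * d : ℝ)) (2 * d))ᶜ = 0)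
    (hμ : μ (Set.Icc (-(2 * d : ℝ)) (2 * d))ᶜ = 0) {δ L : ℝ} (hδ : 0 ≤ δ) (hL : 0 < L)
    (hLip : ∀ x y, x ≤ y → μ.real (Set.Icc x y) ≤ L * (y - x)) (k : ℕ)
    (h : ∀ m, m + 1 ≤ 4 * k + 1 →
      |(∫ x, (geroP d (m + 1)).eval x ∂ν) - ∫ x, (geroP d (m + 1)).eval x ∂μ| ≤ δ)
    (hδk : 361 ^ k * δ ≤ 1) (x : ℝ) :
    |cdfF ν x - cdfF μ x| ≤ ((4 * d + 2) * (128 * L + 32) + 8) / (2 * k + 1 : ℕ) := by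
  set R : ℝ := 4 * d + 2 with hRdef
  set mm : ℝ := ((2 * k + 1 : ℕ) : ℝ) with hmm
  have hmm1 : 1 ≤ mm := by rw [hmm]; exact_mod_cast Nat.le_add_left 1 (2 * k)
  have hd' : (2 : ℝ) ≤ d := by exact_mod_cast hd
  have hR : 0 < R := by positivity
  have hR1 : 1 ≤ R := by rw [hRdef]; linarith
  have htriv : ∀ x, |cdfF ν x - cdfF μ x| ≤ 1 := by
    intro x
    rw [abs_le]
    constructor <;>
    linarith [cdfF_nonneg ν x, cdfF_nonneg μ x, cdfF_le_one ν x, cdfF_le_one μ x]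
  by_cases hlt : mm < 32 * R
  · refine (htriv x).trans ?_
    rw [le_div_iff₀ (by linarith)]
    nlinarith
  push Not at hlt
  set hh : ℝ := 32 * R / mm with hhdef
  have hh0 : 0 < hh := by positivity
  have hh1 : hh ≤ 1 := by rw [hhdef, div_le_one (by linarith)]; exact hlt
  set J : ℝ → ℝ := fun s => (kQ R k).eval s ^ 2 with hJdef
  have hJc : Continuous J := (Polynomial.continuous _).pow 2
  have hJ0 : ∀ s, 0 ≤ J s := fun s => by positivity
  obtain ⟨Z, hZ⟩ : ∃ Z, Z = ∫ s in (-R)..R, J s := ⟨_, rfl⟩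
  obtain ⟨T, hT⟩ : ∃ T, T = (∫ s in (-R)..(-hh), J s) + ∫ s in hh..R, J s := ⟨_, rfl⟩
  have hZm : R * mm / 4 ≤ Z := by rw [hZ]; exact kQ_mass hR k
  have hTm : T ≤ 2 * R ^ 2 / hh := by rw [hT]; exact kQ_tail hR hh0 (hh1.trans hR1) k
  have hT0 : 0 ≤ T := by
    rw [hT]
    exact add_nonneg (intervalIntegral.integral_nonneg (by linarith) fun s _ => hJ0 s)
      (intervalIntegral.integral_nonneg (by linarith) fun s _ => hJ0 s)
  have hTZ : 4 * T ≤ Z := by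
    have e : 2 * R ^ 2 / hh = R * mm / 16 := by
      rw [hhdef]; field_simp; norm_num
    rw [e] at hTm; linarith
  have hZ0 : 0 < Z := lt_of_lt_of_le (by positivity) hZm
  have hbdd : BddAbove (Set.range fun x => |cdfF ν x - cdfF μ x|) := by
    refine ⟨1, ?_⟩
    rintro _ ⟨x, rfl⟩
    exact htriv x
  obtain ⟨D, hD⟩ : ∃ D, D = ⨆ x, |cdfF ν x - cdfF μ x| := ⟨_, rfl⟩
  have hDle : ∀ x, |cdfF ν x - cdfF μ x| ≤ D := fun x => by rw [hD]; exact le_ciSup hbdd x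
  have hD0 : 0 ≤ D := (abs_nonneg _).trans (hDle 0)
  obtain ⟨ε, hεdef⟩ : ∃ ε, ε = 361 ^ k * (R * δ) := ⟨_, rfl⟩
  have hε0 : 0 ≤ ε := by rw [hεdef]; positivity
  have hεR : ε ≤ R := by
    calc ε = R * (361 ^ k * δ) := by rw [hεdef]; ring
      _ ≤ R * 1 := by gcongr
      _ = R := mul_one _
  have hii : ∀ a u v, IntervalIntegrable
      (fun s => J s * (cdfF ν (a + s) - cdfF μ (a + s))) volume u v := by
    intro a u v
    have := (cdfF_ii ν a u v (kQ R k ^ 2)).sub (cdfF_ii μ a u v (kQ R k ^ 2))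
    refine this.congr ?_
    exact fun s _ => by simp only [hJdef, Polynomial.eval_pow, mul_sub]
  have hMlip : ∀ x y, x ≤ y → cdfF μ y - cdfF μ x ≤ L * (y - x) := by
    intro x y hxy
    rw [cdfF_sub μ hxy]
    exact (measureReal_mono Set.Ioc_subset_Icc_self).trans (hLip x y hxy)
  have main : ∀ x, |cdfF ν x - cdfF μ x| ≤ 2 * hh * L + ε / Z + D / 2 := by
    intro x
    have hrhs : 0 ≤ 2 * hh * L + ε / Z + D / 2 := by positivity
    by_cases hx1 : x < -(2 * d : ℝ)
    · have z : ∀ (τ : Measure ℝ), τ (Set.Icc (-(2 * d : ℝ)) (2 * d))ᶜ = 0 → cdfF τ x = 0 := by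
        intro τ hτ
        have hsub : Set.Iic x ⊆ (Set.Icc (-(2 * d : ℝ)) (2 * d))ᶜ := by
          intro y hy hy2
          have h1 : y ≤ x := hy
          have h2 := hy2.1
          linarith
        have : τ (Set.Iic x) = 0 := measure_mono_null hsub hτ
        simp [cdfF, this]
      rw [z ν hν, z μ hμ]; simpa using hrhs
    by_cases hx2 : 2 * (d : ℝ) < x
    · have z : ∀ (τ : Measure ℝ) [IsProbabilityMeasure τ],
          τ (Set.Icc (-(2 * d : ℝ)) (2 * d))ᶜ = 0 → cdfF τ x = 1 := by
        intro τ _ hτ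
        have hsub : (Set.Iic x)ᶜ ⊆ (Set.Icc (-(2 * d : ℝ)) (2 * d))ᶜ := by
          intro y hy hy2
          have h1 : ¬ y ≤ x := hy
          have h2 := hy2.2
          exact h1 (by linarith)
        have : τ (Set.Iic x)ᶜ = 0 := measure_mono_null hsub hτ
        have := (prob_compl_eq_zero_iff measurableSet_Iic).1 this
        simp [cdfF, this]
      rw [z ν hν, z μ hμ]; simpa using hrhs
    push Not at hx1 hx2
    have kb : ∀ a : ℝ, |a| ≤ 2 * d + 1 →
        |∫ s in (-R)..R, J s * (cdfF ν (a + s) - cdfF μ (a + s))| ≤ ε := by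
      intro a ha
      rw [hεdef]
      exact kernel_bound d hd hν hμ hδ k h ha
    obtain ⟨v, hv⟩ : ∃ v, v = cdfF ν x - cdfF μ x := ⟨_, rfl⟩
    have hvD : |v| ≤ D := by rw [hv]; exact hDle x
    have up : (v - 2 * hh * L) * (Z - T) ≤ ε + D * T := by
      refine smooth_one (g := fun s => cdfF ν (x + hh + s) - cdfF μ (x + hh + s)) hJc hJ0 hh0
        (hh1.trans hR1) (hii (x + hh)) ?_ ?_ hT hZ ?_
      · intro s hs
        have h1 := cdfF_mono ν (show x ≤ x + hh + s by linarith [hs.1])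
        have h2 := hMlip x (x + hh + s) (by linarith [hs.1])
        have h3 : L * (x + hh + s - x) ≤ L * (2 * hh) := by gcongr; linarith [hs.2]
        linarith
      · intro s; exact (abs_le.1 (hDle _)).1
      · refine (le_abs_self _).trans (kb _ ?_)
        rw [abs_le]; constructor <;> linarith
    have dn : (-v - 2 * hh * L) * (Z - T) ≤ ε + D * T := by
      refine smooth_one (g := fun s => -(cdfF ν (x - hh + s) - cdfF μ (x - hh + s))) hJc hJ0 hh0
        (hh1.trans hR1) ?_ ?_ ?_ hT hZ ?_
      · intro u v
        simp only [mul_neg]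
        exact (hii (x - hh) u v).neg
      · intro s hs
        have h1 := cdfF_mono ν (show x - hh + s ≤ x by linarith [hs.2])
        have h2 := hMlip (x - hh + s) x (by linarith [hs.2])
        have h3 : L * (x - (x - hh + s)) ≤ L * (2 * hh) := by gcongr; linarith [hs.1]
        linarith
      · intro s
        have := (abs_le.1 (hDle (x - hh + s))).2
        linarith
      · simp only [mul_neg, intervalIntegral.integral_neg]
        refine (neg_le_abs _).trans (kb _ ?_)
        rw [abs_le]; constructor <;> linarith
    have hvZ : |v| * Z ≤ 2 * hh * L * Z + ε + 2 * D * T := by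
      have hp : 0 ≤ 2 * hh * L * T := by positivity
      have hvT := mul_le_mul_of_nonneg_right hvD hT0
      rcases abs_cases v with ⟨e, _⟩ | ⟨e, _⟩ <;> rw [e] at hvT ⊢ <;> nlinarith
    rw [← hv]
    have h2 : 2 * D * T ≤ D / 2 * Z := by nlinarith
    have h3 : |v| * Z ≤ (2 * hh * L + ε / Z + D / 2) * Z := by
      have : ε / Z * Z = ε := by field_simp
      nlinarith
    exact le_of_mul_le_mul_right h3 hZ0
  have hDD : D ≤ 2 * hh * L + ε / Z + D / 2 := by
    conv_lhs => rw [hD]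
    exact ciSup_le main
  have hεZ : ε / Z ≤ 4 / mm := by
    rw [div_le_div_iff₀ hZ0 (by linarith)]
    have := mul_le_mul_of_nonneg_right hεR (by linarith : (0 : ℝ) ≤ mm)
    linarith
  have hfin : D ≤ (128 * R * L + 8) / mm := by
    have e : (128 * R * L + 8) / mm = 4 * hh * L + 2 * (4 / mm) := by rw [hhdef]; ring
    rw [e]; linarith
  refine (hDle x).trans (hfin.trans ?_)
  refine div_le_div_of_nonneg_right ?_ (by linarith)
  nlinarith

theorem disc_of_cdf {ν μ : Measure ℝ} [IsProbabilityMeasure ν]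
    [IsProbabilityMeasure μ] {L D : ℝ} (hL : 0 < L) (hD0 : 0 ≤ D)
    (hLip : ∀ x y, x ≤ y → μ.real (Set.Icc x y) ≤ L * (y - x))
    (hD : ∀ x, |cdfF ν x - cdfF μ x| ≤ D) : discrepancy ν μ ≤ 2 * D := by
  unfold discrepancy
  refine Real.sSup_le ?_ (by positivity)
  rintro r ⟨a, b, hab, rfl⟩
  change |ν.real (Set.Icc a b) - μ.real (Set.Icc a b)| ≤ 2 * D
  have hDb := abs_le.1 (hD b)
  have hDa := abs_le.1 (hD a)
  rw [abs_le]
  constructor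
  · have h1 : ν.real (Set.Ioc a b) ≤ ν.real (Set.Icc a b) := measureReal_mono Set.Ioc_subset_Icc_self
    have h2 : μ.real (Set.Icc a b) ≤ μ.real (Set.Icc a a) + μ.real (Set.Ioc a b) := by
      refine (measureReal_mono (fun x hx => ?_)).trans (measureReal_union_le _ _)
      rcases hx.1.eq_or_lt with e | e
      · left; exact ⟨hx.1, e.ge⟩
      · right; exact ⟨e, hx.2⟩
    have h3 := hLip a a le_rfl
    rw [← cdfF_sub ν hab] at h1
    rw [← cdfF_sub μ hab] at h2
    linarith
  · refine le_of_forall_pos_le_add fun η hη => ?_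
    obtain ⟨a', ha'⟩ : ∃ a', a' = a - η / L := ⟨_, rfl⟩
    have hlt : a' < a := by rw [ha']; have : 0 < η / L := by positivity
                            linarith
    have h1 : ν.real (Set.Icc a b) ≤ ν.real (Set.Ioc a' b) :=
      measureReal_mono fun x hx => ⟨by linarith [hx.1], hx.2⟩
    have h2 : μ.real (Set.Ioc a' b) ≤ μ.real (Set.Icc a' a) + μ.real (Set.Icc a b) := by
      refine (measureReal_mono (fun x hx => ?_)).trans (measureReal_union_le _ _)
      rcases le_total x a with e | e
      · left; exact ⟨hx.1.le, e⟩
      · right; exact ⟨e, hx.2⟩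
    have h3 := hLip a' a hlt.le
    have h4 : L * (a - a') = η := by rw [ha']; field_simp; ring
    rw [← cdfF_sub ν (by linarith)] at h1
    rw [← cdfF_sub μ (by linarith)] at h2
    have hDa' := abs_le.1 (hD a')
    linarith

theorem disc_main (d : ℕ) (hd : 2 ≤ d) : ∃ C : ℝ, 0 < C ∧ ∀ (k : ℕ), 1 ≤ k →
    ∀ ν : Measure ℝ, IsProbabilityMeasure ν → ν (Set.Icc (-(2 * d : ℝ)) (2 * d))ᶜ = 0 →
    (∀ m, m < 4 * k + 1 → |∫ x, (geroP d (m + 1)).eval x ∂ν| * 361 ^ k ≤ 1) →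
    discrepancy ν (kestenMcKay d) ≤ C / k := by
  obtain ⟨hP, hs, ⟨L, hL, hLip⟩, hg⟩ := km_facts d hd
  obtain ⟨K, hK⟩ : ∃ K : ℝ, K = (4 * d + 2) * (128 * L + 32) + 8 := ⟨_, rfl⟩
  have hK0 : 0 < K := by rw [hK]; positivity
  refine ⟨K, hK0, fun k hk ν hν hνs hm => ?_⟩
  have hk' : (1 : ℝ) ≤ k := by exact_mod_cast hk
  have h1 := smooth_cdf d hd hνs hs (δ := (361 ^ k)⁻¹) (by positivity) hL hLip k (by
    intro m hm'
    rw [hg, sub_zero]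
    have := hm m (by omega)
    rwa [← le_div_iff₀ (by positivity), one_div] at this) (by
    rw [mul_inv_cancel₀ (by positivity)])
  have h2 := disc_of_cdf hL (by positivity) hLip h1
  refine h2.trans ?_
  rw [← hK, ← mul_div_assoc, div_le_div_iff₀ (by positivity) (by positivity)]
  push_cast
  nlinarith

end PartC3

section PartD
set_option linter.unusedSimpArgs false
set_option linter.unusedVariables false
open MeasureTheory

theorem markov_union {α : Type*} [Fintype α] {M : ℕ} (F : ℕ → α → ℝ) (hF : ∀ m S, 0 ≤ F m S)
    (E W : ℝ) (hE : 0 < E) (hb : ∀ m < M, ∑ S, F m S ≤ W) (P : α → Prop)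
    (hP : ∀ S, (∀ m < M, F m S * E ≤ 1) → P S) :
    (Fintype.card α : ℝ) - M * (E * W) ≤ (Nat.card {S // P S} : ℝ) := by
  classical
  rw [Nat.card_eq_fintype_card, Fintype.card_subtype]
  have h1 : (Fintype.card α : ℝ) = ∑ S : α, (1 : ℝ) := by simp
  have h2 : ((Finset.univ.filter fun S => P S).card : ℝ) = ∑ S : α, if P S then (1 : ℝ) else 0 := by
    simp
  have h3 : ∑ S : α, ∑ m ∈ Finset.range M, F m S * E ≤ M * (E * W) := by
    rw [Finset.sum_comm]
    calc ∑ m ∈ Finset.range M, ∑ S : α, F m S * E ≤ ∑ m ∈ Finset.range M, E * W := by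
          refine Finset.sum_le_sum fun m hm => ?_
          rw [← Finset.sum_mul, mul_comm]
          exact mul_le_mul_of_nonneg_left (hb m (Finset.mem_range.1 hm)) hE.le
      _ = _ := by simp
  have h4 : ∑ S : α, (1 : ℝ) ≤ ∑ S : α, ((if P S then (1 : ℝ) else 0) +
      ∑ m ∈ Finset.range M, F m S * E) := by
    refine Finset.sum_le_sum fun S _ => ?_
    have hn : ∀ m ∈ Finset.range M, 0 ≤ F m S * E := fun m _ => mul_nonneg (hF m S) hE.le
    by_cases hS : P S
    · rw [if_pos hS]; linarith [Finset.sum_nonneg hn]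
    · rw [if_neg hS, zero_add]
      have : ∃ m, m < M ∧ 1 < F m S * E := by
        by_contra hcon
        push Not at hcon
        exact hS (hP S hcon)
      obtain ⟨m, hm, h⟩ := this
      exact h.le.trans (Finset.single_le_sum hn (Finset.mem_range.2 hm))
  rw [Finset.sum_add_distrib] at h4
  rw [h1, h2]
  linarith

theorem main_thm (d : ℕ) (hd : 2 ≤ d) :
    ∃ C c : ℝ, 0 < C ∧ 0 < c ∧
      ∀ (p : ℕ), p.Prime →
        ∀ (n : ℕ) (π : SL 2 p →* Matrix.unitaryGroup (Fin n) ℂ),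
          IsIrreducibleRep π → (∃ g, π g ≠ 1) →
          (1 - c * (p : ℝ) ^ (-(1/4 : ℝ))) ≤
            (Nat.card {S : Fin d → SL 2 p //
                discrepancy (specMeasure (Amat π S)) (kestenMcKay d) ≤ C / Real.log p} : ℝ) /
              (Nat.card (Fin d → SL 2 p) : ℝ) := by
  obtain ⟨C, hC, hmain⟩ := disc_main d hd
  have hd' : (2 : ℝ) ≤ d := by exact_mod_cast hd
  obtain ⟨Q, hQ⟩ : ∃ Q : ℝ, Q = 25 * 361 * (2 * d) ^ 4 := ⟨_, rfl⟩
  have hQ3 : 3 ≤ Q := by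
    have : (1 : ℝ) ≤ (2 * d) ^ 4 := one_le_pow₀ (by linarith)
    rw [hQ]; linarith
  have hlQ : 0 < Real.log Q := Real.log_pos (by linarith)
  refine ⟨8 * C * Real.log Q, Q + 16 * d, by positivity, by positivity, ?_⟩
  intro p hp n π hπ hnt
  haveI : Fact p.Prime := ⟨hp⟩
  have hp2 : (2 : ℝ) ≤ p := by exact_mod_cast hp.two_le
  have hp0 : (0 : ℝ) < p := by linarith
  set r : ℝ := (p : ℝ) ^ (1 / 4 : ℝ) with hr
  have hr0 : 0 < r := Real.rpow_pos_of_pos hp0 _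
  have hrneg : (p : ℝ) ^ (-(1 / 4 : ℝ)) = r⁻¹ := by rw [Real.rpow_neg hp0.le]
  have hsq : Real.sqrt p = r * r := by
    rw [hr, ← Real.rpow_add hp0, Real.sqrt_eq_rpow]; norm_num
  rw [hrneg]
  by_cases hsmall : r < Q
  · have h1 : 1 ≤ (Q + 16 * d) * r⁻¹ := by
      rw [← div_eq_mul_inv, le_div_iff₀ hr0]
      have : (0 : ℝ) ≤ 16 * d := by positivity
      linarith
    have h2 : (0 : ℝ) ≤ (Nat.card {S : Fin d → SL 2 p //
        discrepancy (specMeasure (Amat π S)) (kestenMcKay d) ≤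
          8 * C * Real.log Q / Real.log p} : ℝ) / (Nat.card (Fin d → SL 2 p) : ℝ) := by positivity
    linarith
  push Not at hsmall
  have hp3 : 3 ≤ p := by
    have h1 : r ≤ p := by
      calc r ≤ (p : ℝ) ^ (1 : ℝ) := Real.rpow_le_rpow_of_exponent_le (by linarith) (by norm_num)
        _ = p := Real.rpow_one _
    have : (3 : ℝ) ≤ p := by linarith
    exact_mod_cast this
  have hn : 0 < n := by
    rcases Nat.eq_zero_or_pos n with h0 | h0
    · subst h0
      obtain ⟨g, hg⟩ := hnt
      exact absurd (Subtype.ext (Subsingleton.elim _ _)) hg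
    · exact h0
  have hlogr : Real.log r = Real.log p / 4 := by
    rw [hr, Real.log_rpow hp0]; ring
  have hlogp : 0 < Real.log p := Real.log_pos (by linarith)
  obtain ⟨t, ht⟩ : ∃ t : ℝ, t = Real.log r / Real.log Q := ⟨_, rfl⟩
  have ht1 : 1 ≤ t := by
    rw [ht, one_le_div hlQ]
    exact Real.log_le_log (by linarith) hsmall
  set k : ℕ := ⌊t⌋₊ with hk
  have hk1 : 1 ≤ k := (Nat.one_le_floor_iff t).2 ht1
  have hkt : (k : ℝ) ≤ t := Nat.floor_le (by linarith)
  have htk : t < k + 1 := Nat.lt_floor_add_one t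
  have hk1' : (1 : ℝ) ≤ k := by exact_mod_cast hk1
  have hQk : Q ^ k ≤ r := by
    rw [← Real.log_le_log_iff (by positivity) hr0, Real.log_pow]
    rw [ht, le_div_iff₀ hlQ] at hkt
    exact hkt
  have hCk : C / k ≤ 8 * C * Real.log Q / Real.log p := by
    rw [div_le_div_iff₀ (by positivity) hlogp]
    have h1 : t ≤ 2 * k := by linarith
    rw [ht, div_le_iff₀ hlQ, hlogr] at h1
    have h2 : Real.log p ≤ 8 * k * Real.log Q := by linarith
    calc C * Real.log p ≤ C * (8 * k * Real.log Q) := by gcongr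
      _ = _ := by ring
  set tot : ℝ := (Fintype.card (Fin d → SL 2 p) : ℝ) with htot
  have htot0 : 0 < tot := by
    rw [htot]; exact_mod_cast Fintype.card_pos
  obtain ⟨W, hW⟩ : ∃ W : ℝ, W = (2 * d) ^ (4 * k + 1) * (8 * (4 * k + 1) * tot) / Real.sqrt p :=
    ⟨_, rfl⟩
  have hs0 : 0 < Real.sqrt p := Real.sqrt_pos.2 hp0
  have hmk := markov_union (α := Fin d → SL 2 p) (M := 4 * k + 1)
    (fun m S => |∫ x, (geroP d (m + 1)).eval x ∂(specMeasure (Amat π S))|)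
    (fun m S => abs_nonneg _) (361 ^ k) W (by positivity) (by
      intro m hm
      rw [hW, le_div_iff₀ hs0]
      refine (spec_gero hp3 hn π hπ hnt m).trans ?_
      have hm' : (m : ℝ) + 1 ≤ 4 * k + 1 := by
        have : m + 1 ≤ 4 * k + 1 := hm
        exact_mod_cast this
      have h1 : (2 * (d : ℝ)) ^ (m + 1) ≤ (2 * d) ^ (4 * k + 1) :=
        pow_le_pow_right₀ (by linarith) hm
      have h2 : 8 * ((m : ℝ) + 1) * tot ≤ 8 * (4 * k + 1) * tot := by gcongr
      exact mul_le_mul h1 h2 (by positivity) (by positivity))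
    (fun S => discrepancy (specMeasure (Amat π S)) (kestenMcKay d) ≤
          8 * C * Real.log Q / Real.log p) (by
      intro S hS
      exact (hmain k hk1 _ (specMeasure_prob hn (Amat_herm π S)) (specMeasure_supp π S) hS).trans hCk)
  rw [Nat.card_eq_fintype_card (α := Fin d → SL 2 p), ← htot, le_div_iff₀ htot0]
  refine le_trans ?_ hmk
  have h5 : ((4 : ℝ) * k + 1) ≤ 5 ^ k := by
    have := one_add_mul_le_pow (a := (4 : ℝ)) (by norm_num) k
    norm_num at this
    linarith
  have hfin : ((4 * k + 1 : ℕ) : ℝ) * (361 ^ k * W) ≤ 16 * d * r⁻¹ * tot := by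
    have e1 : ((4 * k + 1 : ℕ) : ℝ) * (361 ^ k * W) =
        (16 * d * tot) * (((4 * k + 1) * (4 * k + 1)) * (361 ^ k * ((2 * d) ^ 4) ^ k)) /
          Real.sqrt p := by
      rw [hW, pow_succ, pow_mul]; push_cast; ring
    rw [e1, div_le_iff₀ hs0, hsq]
    have e2 : 16 * d * r⁻¹ * tot * (r * r) = (16 * d * tot) * r := by
      field_simp
    rw [e2]
    refine mul_le_mul_of_nonneg_left ?_ (by positivity)
    refine le_trans ?_ hQk
    calc ((4 * (k : ℝ) + 1) * (4 * k + 1)) * (361 ^ k * ((2 * d) ^ 4) ^ k)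
        ≤ (5 ^ k * 5 ^ k) * (361 ^ k * ((2 * d) ^ 4) ^ k) := by gcongr
      _ = Q ^ k := by
        rw [hQ, ← mul_pow, ← mul_pow, ← mul_pow]; congr 1; ring
  have hQr : 0 ≤ Q * r⁻¹ * tot := by positivity
  nlinarith

end PartD

/-- Fix d ≥ 2. There exist C, c > 0 depending only on d such that for every prime p
and every nontrivial irreducible unitary representation π of SL₂(ℤ/pℤ), the proportion of tuples
S ∈ SL₂(ℤ/pℤ)^d with D(μ_{π,S}, f_{2d}) ≤ C / log p is at least 1 − c·p^{−1/4}. -/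
theorem stmt0 (d : ℕ) (hd : 2 ≤ d) :
    ∃ C c : ℝ, 0 < C ∧ 0 < c ∧
      ∀ (p : ℕ), p.Prime →
        ∀ (n : ℕ) (π : SL 2 p →* Matrix.unitaryGroup (Fin n) ℂ),
          IsIrreducibleRep π → (∃ g, π g ≠ 1) →
          (1 - c * (p : ℝ) ^ (-(1/4 : ℝ))) ≤
            (Nat.card {S : Fin d → SL 2 p //
                discrepancy (specMeasure (Amat π S)) (kestenMcKay d) ≤ C / Real.log p} : ℝ) /
              (Nat.card (Fin d → SL 2 p) : ℝ) := by
  exact main_thm d hd
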